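/- arXiv:2409.18902 — 2 statements merged into one kernel-verified Lean document; each statement's English description precedes it below -/
import Mathlib

section
/- Let D be a weakly connected directed graph and σ an acyclic, long arc positive circuit signature of D (meaning |σ(C)⁺| ≥ |σ(C)⁻| for every cycle C). Then the simplices {Q̃_T : T ∈ tree(D,σ)} form a dissection of Q̃_D: they have pairwise disjoint interiors and their union is Q̃_D. -/
open Finset Pointwise

noncomputable section

variable {V E ι : Type*}

/-- The vector `x_f ∈ ℝ^V` of an edge `f` with tail `t f` and head `h f`:
`+1` at the head, `-1` at the tail, `0` elsewhere (so `0` for a loop). -/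
def xvec [DecidableEq V] (t h : E → V) (f : E) : V → ℝ :=
  fun v => (if v = h f then 1 else 0) - (if v = t f then 1 else 0)

/-- The extended root polytope of the subgraph with edge set `S`:
`conv({0} ∪ {x_f : f ∈ S})`. -/
def rootPolyOn [DecidableEq V] (t h : E → V) (S : Set E) : Set (V → ℝ) :=
  convexHull ℝ ({0} ∪ (xvec t h '' S))

/-- The underlying (simple) undirected graph of the edges in `S`. -/
def underlyingOn (t h : E → V) (S : Set E) : SimpleGraph V :=
  SimpleGraph.fromRel (fun u v => ∃ f ∈ S, t f = u ∧ h f = v)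

/-- A spanning tree: a set of edges whose underlying graph is connected and which
has `|V| - 1` edges. -/
def IsSpanningTree [Fintype V] (t h : E → V) (T : Finset E) : Prop :=
  (underlyingOn t h ↑T).Connected ∧ T.card + 1 = Fintype.card V

/-- The number of lattice points of the `k`-th dilate of `Q`. -/
def latCount [Fintype ι] (Q : Set (ι → ℝ)) (k : ℕ) : ℕ :=
  Nat.card {p : ι → ℤ // (fun i => (p i : ℝ)) ∈ (k : ℝ) • Q}

/-- The Ehrhart series of `Q` as a formal power series. -/
def ehrSeries [Fintype ι] (Q : Set (ι → ℝ)) : PowerSeries ℤ :=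
  PowerSeries.mk fun k => (latCount Q k : ℤ)

/-- The dimension of a polytope: the rank of its vector span. -/
def pdim (Q : Set (ι → ℝ)) : ℕ := Module.finrank ℝ ↥(vectorSpan ℝ Q)

/-- `p` is the `h^*`-polynomial of `Q`: `(1-t)^{dim Q + 1} · Ehr_Q(t) = p(t)`. -/
def IsHStar [Fintype ι] (Q : Set (ι → ℝ)) (p : Polynomial ℤ) : Prop :=
  (1 - PowerSeries.X) ^ (pdim Q + 1) * ehrSeries Q = PowerSeries.mk fun i => p.coeff i

/-- The `±1` vector of a signed cycle with positive arc `Cp` and negative arc `Cm`. -/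
def chiVec [DecidableEq E] (Cp Cm : Finset E) : E → ℝ :=
  fun f => (if f ∈ Cp then 1 else 0) - (if f ∈ Cm then 1 else 0)

/-- A circulation: an assignment of reals to edges with zero net flow at each vertex. -/
def IsCirculation [Fintype E] [DecidableEq V] (t h : E → V) (φ : E → ℝ) : Prop :=
  ∑ f, φ f • xvec t h f = 0

/-- `(Cp, Cm)` is a signed cycle: the arcs are disjoint, the union is nonempty, the
`±1` vector is a circulation, and the support `Cp ∪ Cm` is minimal among supports of
nonzero circulations (i.e. it is a circuit of the graphic oriented matroid). -/
def IsSignedCycle [Fintype E] [DecidableEq E] [DecidableEq V] (t h : E → V)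
    (Cp Cm : Finset E) : Prop :=
  Disjoint Cp Cm ∧ (Cp ∪ Cm).Nonempty ∧ IsCirculation t h (chiVec Cp Cm) ∧
    ∀ φ : E → ℝ, IsCirculation t h φ → φ ≠ 0 →
      (∀ f, φ f ≠ 0 → f ∈ Cp ∪ Cm) → ∀ f ∈ Cp ∪ Cm, φ f ≠ 0

/-- A circuit signature: a choice, for each cycle, of exactly one of its two
orientations. -/
def IsCircuitSignature [Fintype E] [DecidableEq E] [DecidableEq V] (t h : E → V)
    (σ : Set (Finset E × Finset E)) : Prop :=
  (∀ q ∈ σ, IsSignedCycle t h q.1 q.2) ∧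
    ∀ Cp Cm : Finset E, IsSignedCycle t h Cp Cm → ((Cp, Cm) ∈ σ ↔ (Cm, Cp) ∉ σ)

/-- Acyclicity of a circuit signature: no nontrivial nonnegative combination of the
vectors of the chosen signed cycles vanishes. -/
def IsAcyclicSig [DecidableEq E] (σ : Set (Finset E × Finset E)) : Prop :=
  ∀ (s : Finset (Finset E × Finset E)) (a : Finset E × Finset E → ℝ),
    ↑s ⊆ σ → (∀ q, 0 ≤ a q) → (∃ q ∈ s, a q ≠ 0) →
      ∑ q ∈ s, a q • chiVec q.1 q.2 ≠ 0

/-- A weight function is generic if the two arcs of every cycle have different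
total weights. -/
def GenericWeight [Fintype E] [DecidableEq E] [DecidableEq V] (t h : E → V)
    (w : E → ℝ) : Prop :=
  ∀ Cp Cm : Finset E, IsSignedCycle t h Cp Cm → ∑ f ∈ Cp, w f ≠ ∑ f ∈ Cm, w f

/-- The circuit signature `cir^w`: orient each cycle so that the positive arc has
the larger total `w`-weight. -/
def cirw [Fintype E] [DecidableEq E] [DecidableEq V] (t h : E → V) (w : E → ℝ) :
    Set (Finset E × Finset E) :=
  {q | IsSignedCycle t h q.1 q.2 ∧ ∑ f ∈ q.2, w f < ∑ f ∈ q.1, w f}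

/-- `tree(D,σ)`: spanning trees `T` such that every non-tree edge `f` lies in the
positive arc of the (σ-oriented) fundamental cycle of `f`, i.e. of the unique cycle
contained in `T ∪ {f}`. -/
def treeSet [Fintype V] [Fintype E] [DecidableEq V] [DecidableEq E] (t h : E → V)
    (σ : Set (Finset E × Finset E)) : Set (Finset E) :=
  {T | IsSpanningTree t h T ∧
    ∀ f ∉ T, ∀ Cp Cm : Finset E, (Cp, Cm) ∈ σ → Cp ∪ Cm ⊆ insert f T → f ∈ Cp}

/-- `F` is a face of `Q`: the locus where some linear functional bounded above on `Q`
attains its maximum. -/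
def IsFaceOf (Q F : Set (ι → ℝ)) : Prop :=
  ∃ (l : (ι → ℝ) →ₗ[ℝ] ℝ) (c : ℝ), (∀ y ∈ Q, l y ≤ c) ∧ F = {y ∈ Q | l y = c}

/-- `F` is a facet of `Q`: a face of codimension one. -/
def IsFacetOf (Q F : Set (ι → ℝ)) : Prop :=
  IsFaceOf Q F ∧ pdim F + 1 = pdim Q

end

/-!
By Gordan's theorem, acyclicity of `σ` yields an edge weight `w` that is positive on every chosen
cycle. Consider the linear program of writing a point of `Q̃_D` as a combination `∑ l_e x_e` with
`l ≥ 0`, `∑ l_e ≤ 1` of least weight `∑ l_e w_e`. The trees of `tree(D,σ)` are its dual feasible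
bases: such a `T` has a potential `g` with `g(x_e) = w_e` on `T` and `g(x_e) < w_e` off `T`.

Disjointness: for two such trees, `g₁ - g₂` is nonnegative on `Q̃_{T₁}` and nonpositive on
`Q̃_{T₂}`. If it vanishes at a relative interior point of `Q̃_{T₁}`, it vanishes on all of
`Q̃_{T₁}`, whence `T₁ ⊆ T₂`.

Covering: moving against a chosen cycle lowers the weight and, by long arc positivity, does not
increase `∑ l_e`. So the support of an optimal `l` contains no positive arc of `σ`. For a generic
point the support is also connected, which makes it a tree of `tree(D,σ)`. Generic points are dense
and the union of the `Q̃_T` is closed.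
-/

theorem exists_dual_forall_apply_eq {K W ι : Type*} [Field K] [AddCommGroup W] [Module K W]
    {v : ι → W} {s : Set ι} (hv : LinearIndepOn K v s) (c : ι → K) :
    ∃ f : Module.Dual K W, ∀ i ∈ s, f (v i) = c i := by
  obtain ⟨g, hg⟩ := LinearMap.exists_leftInverse_of_injective
    (Finsupp.linearCombination K fun i : s => v i) (LinearMap.ker_eq_bot.2 hv)
  refine ⟨Finsupp.linearCombination K (fun i : s => c i) ∘ₗ g, fun i hi => ?_⟩
  have hgi : g (v i) = Finsupp.single ⟨i, hi⟩ 1 := by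
    simpa using LinearMap.congr_fun hg (Finsupp.single ⟨i, hi⟩ 1)
  simp [hgi]

section Convexity

open scoped Topology

theorem exists_continuousLinearMap_forall_pos {ι F : Type*} [Fintype ι] [NormedAddCommGroup F]
    [NormedSpace ℝ F] (v : ι → F) (hv : ∀ a : ι → ℝ, 0 ≤ a → a ≠ 0 → ∑ i, a i • v i ≠ 0) :
    ∃ f : F →L[ℝ] ℝ, ∀ i, 0 < f (v i) := by
  classical
  set A := Fintype.linearCombination ℝ v
  have hconvex : Convex ℝ (A '' stdSimplex ℝ ι) := (convex_stdSimplex ℝ ι).linear_image A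
  have hclosed : IsClosed (A '' stdSimplex ℝ ι) :=
    ((isCompact_stdSimplex ℝ ι).image A.continuous_on_pi).isClosed
  have hzero : (0 : F) ∉ A '' stdSimplex ℝ ι := by
    rintro ⟨a, ⟨ha0, ha1⟩, ha⟩
    refine hv a ha0 ?_ ha
    rintro rfl
    simp at ha1
  obtain ⟨f, u, hu, hf⟩ := geometric_hahn_banach_point_closed hconvex hclosed hzero
  refine ⟨f, fun i => (map_zero f ▸ hu).trans (hf _ ⟨Pi.single i 1, single_mem_stdSimplex ℝ i, ?_⟩)⟩
  simp [A]

theorem exists_one_lt_lineMap_mem_of_mem_intrinsicInterior {F : Type*} [NormedAddCommGroup F]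
    [NormedSpace ℝ F] {s : Set F} {x y : F} (hx : x ∈ intrinsicInterior ℝ s) (hy : y ∈ s) :
    ∃ r : ℝ, 1 < r ∧ AffineMap.lineMap y x r ∈ s := by
  obtain ⟨z, hz, rfl⟩ := mem_intrinsicInterior.1 hx
  let γ : ℝ → affineSpan ℝ s := fun r =>
    ⟨AffineMap.lineMap y (z : F) r, AffineMap.lineMap_mem r (subset_affineSpan ℝ s hy) z.2⟩
  have hγ : Continuous γ := AffineMap.lineMap_continuous.subtype_mk _
  have hγ1 : γ 1 = z := Subtype.ext (AffineMap.lineMap_apply_one _ _)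
  have hnear : ∀ᶠ r in 𝓝[>] (1 : ℝ), γ r ∈ interior ((↑) ⁻¹' s) :=
    hγ.continuousWithinAt.eventually_mem (isOpen_interior.mem_nhds (hγ1 ▸ hz))
  obtain ⟨r, hr, hr1⟩ := (hnear.and self_mem_nhdsWithin).exists
  have hmem : γ r ∈ ((↑) ⁻¹' s : Set (affineSpan ℝ s)) := interior_subset hr
  exact ⟨r, hr1, hmem⟩

theorem eq_of_isMinOn_of_mem_intrinsicInterior {F : Type*} [NormedAddCommGroup F] [NormedSpace ℝ F]
    {s : Set F} {f : F →ₗ[ℝ] ℝ} {x y : F} (hf : IsMinOn f s x) (hx : x ∈ intrinsicInterior ℝ s)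
    (hy : y ∈ s) : f y = f x := by
  obtain ⟨r, hr, hmem⟩ := exists_one_lt_lineMap_mem_of_mem_intrinsicInterior hx hy
  have hle : f x ≤ f (AffineMap.lineMap y x r) := hf hmem
  have hxy : f x ≤ f y := hf hy
  rw [AffineMap.lineMap_apply_module] at hle
  simp only [map_add, map_smul, smul_eq_mul] at hle
  nlinarith

theorem subset_closure_diff_iUnion_submodule {F κ : Type*} [Finite κ] [NormedAddCommGroup F]
    [NormedSpace ℝ F] [FiniteDimensional ℝ F] {K : Set F} (hK : Convex ℝ K)
    (hKi : (interior K).Nonempty) (p : κ → Submodule ℝ F) (hp : ∀ i, p i ≠ ⊤) :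
    K ⊆ closure (K \ ⋃ i, (p i : Set F)) := by
  have hopen (i) : IsOpen (p i : Set F)ᶜ := (p i).closed_of_finiteDimensional.isOpen_compl
  have hdense (i) : Dense (p i : Set F)ᶜ := by
    rw [← interior_eq_empty_iff_dense_compl, ← Set.not_nonempty_iff_eq_empty]
    exact fun h => hp i ((p i).eq_top_of_nonempty_interior' h)
  calc K ⊆ closure (interior K) :=
        (hK.closure_interior_eq_closure_of_nonempty_interior hKi).symm ▸ subset_closure
    _ ⊆ closure (interior K ∩ ⋂ i, (p i : Set F)ᶜ) :=
        closure_minimal ((dense_iInter_of_isOpen hopen hdense).open_subset_closure_inter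
          isOpen_interior) isClosed_closure
    _ ⊆ closure (K \ ⋃ i, (p i : Set F)) := by
        rw [Set.sdiff_eq, Set.compl_iUnion]
        gcongr
        exact interior_subset

end Convexity

section CornerSimplex

open scoped Topology

/-- The corner of the positive orthant cut out by `∑ i, l i ≤ 1`: the coefficient vectors that
parametrise the convex hull of the origin and a finite family of points. -/
def cornerSimplex (ι : Type*) [Fintype ι] : Set (ι → ℝ) := {l | 0 ≤ l ∧ ∑ i, l i ≤ 1}

variable {ι : Type*} [Fintype ι]

theorem convex_cornerSimplex : Convex ℝ (cornerSimplex ι) :=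
  (convex_Ici 0).inter (convex_halfSpace_le (f := fun l : ι → ℝ => ∑ i, l i)
    ⟨fun _ _ => sum_add_distrib, fun a l => (mul_sum univ l a).symm⟩ 1)

theorem isCompact_cornerSimplex : IsCompact (cornerSimplex ι) := by
  refine (isCompact_Icc (a := (0 : ι → ℝ)) (b := 1)).of_isClosed_subset ?_ fun l hl =>
    ⟨hl.1, fun i => (single_le_sum (fun j _ => hl.1 j) (mem_univ i)).trans hl.2⟩
  exact isClosed_Ici.inter (isClosed_Iic.preimage (f := fun l : ι → ℝ => ∑ i, l i) (by fun_prop))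

theorem interior_cornerSimplex_nonempty : (interior (cornerSimplex ι)).Nonempty := by
  set U : Set (ι → ℝ) := {l | (∀ i, 0 < l i) ∧ ∑ i, l i < 1}
  have hU : IsOpen U := by
    refine IsOpen.and ?_ (isOpen_lt (by fun_prop) continuous_const)
    simp only [Set.ofPred_forall]
    exact isOpen_iInter_of_finite fun i => isOpen_lt continuous_const (continuous_apply i)
  have hsub : U ⊆ cornerSimplex ι := fun l hl => ⟨fun i => (hl.1 i).le, hl.2.le⟩
  refine ⟨fun _ => ((Fintype.card ι : ℝ) + 1)⁻¹,
    interior_maximal hsub hU ⟨fun _ => by positivity, ?_⟩⟩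
  rw [sum_const, card_univ, nsmul_eq_mul, ← div_eq_mul_inv, div_lt_one (by positivity)]
  exact lt_add_one _

theorem linearCombination_mem_of_mem_cornerSimplex {F : Type*} [AddCommGroup F] [Module ℝ F]
    {x : ι → F} {C : Set F} (hC : Convex ℝ C) (h0 : 0 ∈ C) {l : ι → ℝ} (hl : l ∈ cornerSimplex ι)
    (hx : ∀ i, l i ≠ 0 → x i ∈ C) : Fintype.linearCombination ℝ x l ∈ C := by
  have hmem := hC.finsum_mem (w := fun o : Option ι => o.elim (1 - ∑ i, l i) l)
    (z := fun o => o.elim 0 x) (by rintro (_ | i); exacts [sub_nonneg.2 hl.2, hl.1 i])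
    (by simp [finsum_eq_sum_of_fintype]) (by rintro (_ | i) hi; exacts [h0, hx i hi])
  simpa [finsum_eq_sum_of_fintype, Fintype.linearCombination_apply] using hmem

theorem mem_convexHull_zero_union_image_iff {F : Type*} [AddCommGroup F] [Module ℝ F]
    {x : ι → F} {S : Set ι} {p : F} :
    p ∈ convexHull ℝ ({0} ∪ x '' S) ↔
      ∃ l ∈ cornerSimplex ι, Function.support l ⊆ S ∧ Fintype.linearCombination ℝ x l = p := by
  classical
  constructor
  · intro hp
    have hconvex : Convex ℝ (cornerSimplex ι ∩ {l | Function.support l ⊆ S}) :=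
      convex_cornerSimplex.inter fun l hl m hm a b _ _ _ =>
        (Function.support_add _ _).trans <| Set.union_subset
          ((Function.support_const_smul_subset a l).trans hl)
          ((Function.support_const_smul_subset b m).trans hm)
    have hsub : {0} ∪ x '' S ⊆ Fintype.linearCombination ℝ x ''
        (cornerSimplex ι ∩ {l | Function.support l ⊆ S}) := by
      rintro _ (rfl | ⟨i, hi, rfl⟩)
      · exact ⟨0, ⟨⟨le_rfl, by simp⟩, by simp⟩, map_zero _⟩
      · exact ⟨Pi.single i 1, ⟨⟨Pi.single_nonneg.2 zero_le_one, by simp⟩,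
          Pi.support_single_subset.trans (by simpa)⟩, by simp⟩
    obtain ⟨l, ⟨hl, hlS⟩, hlp⟩ := convexHull_min hsub (hconvex.linear_image _) hp
    exact ⟨l, hl, hlS, hlp⟩
  · rintro ⟨l, hl, hlS, rfl⟩
    exact linearCombination_mem_of_mem_cornerSimplex (convex_convexHull ℝ _)
      (subset_convexHull ℝ _ (by simp)) hl
      fun i hi => subset_convexHull ℝ _ (.inr (Set.mem_image_of_mem x (hlS hi)))

theorem exists_isMinOn_cornerSimplex {M : Type*} [AddCommGroup M] [Module ℝ M]
    [TopologicalSpace M] [IsTopologicalAddGroup M] [ContinuousSMul ℝ M] [T1Space M]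
    (A : (ι → ℝ) →ₗ[ℝ] M) (w : ι → ℝ) {l : ι → ℝ} (hl : l ∈ cornerSimplex ι) :
    ∃ m ∈ cornerSimplex ι, A m = A l ∧
      IsMinOn (· ⬝ᵥ w) (cornerSimplex ι ∩ {m' | A m' = A m}) m := by
  have hcompact : IsCompact (cornerSimplex ι ∩ {m' | A m' = A l}) :=
    isCompact_cornerSimplex.inter_right (isClosed_singleton.preimage A.continuous_on_pi)
  obtain ⟨m, ⟨hm, hAm⟩, hmin⟩ := hcompact.exists_isMinOn ⟨l, hl, rfl⟩
    (f := (· ⬝ᵥ w)) (by unfold dotProduct; fun_prop)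
  exact ⟨m, hm, hAm, by rwa [hAm]⟩

theorem exists_eq_zero_of_isMinOn_cornerSimplex {M : Type*} [AddCommGroup M] [Module ℝ M]
    {A : (ι → ℝ) →ₗ[ℝ] M} {w m c : ι → ℝ} (hm : m ∈ cornerSimplex ι)
    (hmin : IsMinOn (· ⬝ᵥ w) (cornerSimplex ι ∩ {m' | A m' = A m}) m)
    (hAc : A c = 0) (hc : 0 ≤ ∑ i, c i) (hcw : 0 < c ⬝ᵥ w) :
    ∃ i, 0 < c i ∧ m i = 0 := by
  by_contra! hpos
  -- for small `ε`, `m - ε • c` would be a feasible point of smaller weight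
  have hev : ∀ᶠ ε in 𝓝[>] (0 : ℝ), ∀ i, 0 ≤ m i - ε * c i := by
    refine Filter.eventually_all.2 fun i => ?_
    rcases le_or_gt (c i) 0 with hci | hci
    · filter_upwards [self_mem_nhdsWithin] with ε hε
      exact sub_nonneg.2 ((mul_nonpos_of_nonneg_of_nonpos (le_of_lt hε) hci).trans (hm.1 i))
    · have hmi : 0 < m i := (hm.1 i).lt_of_ne' (hpos i hci)
      have hcont : Continuous fun ε : ℝ => m i - ε * c i := by fun_prop
      have hnear := (hcont.tendsto' 0 (m i) (by simp)).eventually_const_lt hmi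
      exact (hnear.filter_mono nhdsWithin_le_nhds).mono fun ε => le_of_lt
  obtain ⟨ε, hε, hε0 : 0 < ε⟩ := (hev.and self_mem_nhdsWithin).exists
  have hmem : m - ε • c ∈ cornerSimplex ι ∩ {m' | A m' = A m} := by
    refine ⟨⟨hε, ?_⟩, by simp [hAc]⟩
    simp only [Pi.sub_apply, Pi.smul_apply, smul_eq_mul, sum_sub_distrib, ← mul_sum]
    exact (sub_le_self _ (by positivity)).trans hm.2
  have hle : m ⬝ᵥ w ≤ (m - ε • c) ⬝ᵥ w := hmin hmem
  rw [sub_dotProduct, smul_dotProduct, smul_eq_mul] at hle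
  linarith [mul_pos hε0 hcw]

end CornerSimplex

section Digraph

variable {V E : Type*} {t h : E → V}

theorem reachable_tail_head {S : Set E} {f : E} (hf : f ∈ S) :
    (underlyingOn t h S).Reachable (t f) (h f) := by
  by_cases hloop : t f = h f
  · rw [hloop]
  · exact SimpleGraph.Adj.reachable ((SimpleGraph.fromRel_adj ..).2 ⟨hloop, .inl ⟨f, hf, rfl, rfl⟩⟩)

section EdgeVectors

variable [DecidableEq V]

theorem xvec_eq_single_sub_single (t h : E → V) (f : E) :
    xvec t h f = Pi.single (h f) 1 - Pi.single (t f) 1 := by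
  ext v
  simp [xvec, Pi.single_apply]

/-- The boundary map `ℝ^E → ℝ^V` of the digraph, `φ ↦ ∑ f, φ f • x_f`, with the circulations as its
kernel. -/
def boundary [Fintype E] (t h : E → V) : (E → ℝ) →ₗ[ℝ] (V → ℝ) :=
  Fintype.linearCombination ℝ (xvec t h)

theorem boundary_apply [Fintype E] (φ : E → ℝ) : boundary t h φ = ∑ f, φ f • xvec t h f := rfl

theorem boundary_single [Fintype E] [DecidableEq E] (f : E) :
    boundary t h (Pi.single f 1) = xvec t h f := by
  simp [boundary]

theorem dual_boundary_apply [Fintype E] (g : Module.Dual ℝ (V → ℝ)) (φ : E → ℝ) :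
    g (boundary t h φ) = ∑ e, φ e * g (xvec t h e) := by
  simp [boundary_apply]

theorem boundary_mem_span [Fintype E] {φ : E → ℝ} {S : Set E} (hφ : Function.support φ ⊆ S) :
    boundary t h φ ∈ Submodule.span ℝ (xvec t h '' S) := by
  refine Submodule.sum_mem _ fun e _ => ?_
  by_cases he : φ e = 0
  · simp [he]
  · exact Submodule.smul_mem _ _ (Submodule.subset_span (Set.mem_image_of_mem _ (hφ he)))

/-- The functional on `ℝ^V` adding up the coordinates in `U`; on an edge vector it is the signed
crossing number of the cut `U`. -/
def cutSum (U : Finset V) : Module.Dual ℝ (V → ℝ) := ∑ v ∈ U, LinearMap.proj v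

theorem cutSum_single (U : Finset V) (v : V) :
    cutSum U (Pi.single v 1) = if v ∈ U then 1 else 0 := by
  simp [cutSum, Pi.single_apply]

theorem cutSum_xvec (U : Finset V) (f : E) :
    cutSum U (xvec t h f) = (if h f ∈ U then 1 else 0) - if t f ∈ U then 1 else 0 := by
  rw [xvec_eq_single_sub_single, map_sub, cutSum_single, cutSum_single]

theorem exists_cutSum_xvec_eq_single [Finite V] [DecidableEq E] {S : Set E}
    (hS : LinearIndepOn ℝ (xvec t h) S) {e : E} (he : e ∈ S) :
    ∃ U : Finset V, ∀ i ∈ S, cutSum U (xvec t h i) = (Pi.single e 1 : E → ℝ) i := by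
  cases nonempty_fintype V
  obtain ⟨g, hg⟩ := exists_dual_forall_apply_eq hS (Pi.single e (1 : ℝ))
  -- `g` is constant on the components of the forest `S \ {e}` and jumps by one along `e`
  set U : Finset V := {v | g (Pi.single v 1) = g (Pi.single (h e) 1)}
  refine ⟨U, fun i hi => ?_⟩
  have hgi := hg i hi
  rw [xvec_eq_single_sub_single, map_sub] at hgi
  rw [Pi.single_apply] at hgi ⊢
  split_ifs at hgi ⊢ with hie
  · subst hie
    have htail : t i ∉ U := by simp only [U, mem_filter_univ]; linarith
    simp [cutSum_xvec, htail, U]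
  · simp [cutSum_xvec, U, sub_eq_zero.1 hgi]

theorem single_sub_single_mem_span_of_reachable {S : Set E} {u v : V}
    (huv : (underlyingOn t h S).Reachable u v) :
    Pi.single v 1 - Pi.single u 1 ∈ Submodule.span ℝ (xvec t h '' S) := by
  have hedge {f : E} (hf : f ∈ S) :
      Pi.single (h f) 1 - Pi.single (t f) 1 ∈ Submodule.span ℝ (xvec t h '' S) :=
    xvec_eq_single_sub_single t h f ▸ Submodule.subset_span (Set.mem_image_of_mem _ hf)
  obtain ⟨p⟩ := huv
  induction p with
  | nil => simp
  | @cons a b c hab _ ih =>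
    rw [← sub_add_sub_cancel]
    refine Submodule.add_mem _ ih ?_
    obtain ⟨-, ⟨f, hf, rfl, rfl⟩ | ⟨f, hf, rfl, rfl⟩⟩ := (SimpleGraph.fromRel_adj ..).1 hab
    · exact hedge hf
    · exact sub_mem_comm_iff.1 (hedge hf)

section Spanning

variable [Fintype V]

theorem span_xvec_le_ker_cutSum_univ (S : Set E) :
    Submodule.span ℝ (xvec t h '' S) ≤ LinearMap.ker (cutSum (univ : Finset V)) := by
  rw [Submodule.span_le]
  rintro _ ⟨f, -, rfl⟩
  simp [cutSum_xvec]

theorem connected_underlyingOn_iff_span_eq_ker [Nonempty V] {S : Set E} :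
    (underlyingOn t h S).Connected ↔
      Submodule.span ℝ (xvec t h '' S) = LinearMap.ker (cutSum (univ : Finset V)) := by
  classical
  constructor
  · refine fun hS => (span_xvec_le_ker_cutSum_univ S).antisymm fun x hx => ?_
    obtain ⟨u⟩ := ‹Nonempty V›
    have hsum : ∑ v, x v = 0 := by simpa [cutSum] using hx
    have hx_eq : x = ∑ v, x v • (Pi.single v 1 - Pi.single u 1) := by
      simp_rw [smul_sub, sum_sub_distrib, ← sum_smul, hsum, zero_smul, sub_zero]
      exact pi_eq_sum_univ' x
    rw [hx_eq]
    exact Submodule.sum_mem _ fun v _ =>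
      Submodule.smul_mem _ _ (single_sub_single_mem_span_of_reachable (hS.preconnected u v))
  · refine fun hspan => ⟨fun u v => ?_⟩
    set U : Finset V := {a | (underlyingOn t h S).Reachable u a}
    have hU : Submodule.span ℝ (xvec t h '' S) ≤ LinearMap.ker (cutSum U) := by
      rw [Submodule.span_le]
      rintro _ ⟨f, hf, rfl⟩
      have hiff : h f ∈ U ↔ t f ∈ U := by
        simpa [U] using ⟨fun hr => hr.trans (reachable_tail_head hf).symm,
          fun hr => hr.trans (reachable_tail_head hf)⟩
      simp [cutSum_xvec, hiff]
    have hmem : Pi.single v 1 - Pi.single u 1 ∈ LinearMap.ker (cutSum (univ : Finset V)) := by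
      simp [cutSum_single]
    have hu : u ∈ U := by simp [U]
    by_contra hv
    have hvU : v ∉ U := by simpa [U] using hv
    have hcut : cutSum U (Pi.single v 1 - Pi.single u 1) = 0 := hU (hspan ▸ hmem)
    simp [cutSum_single, hu, hvU] at hcut

theorem finrank_span_xvec_add_one {S : Set E} (hS : (underlyingOn t h S).Connected) :
    Module.finrank ℝ (Submodule.span ℝ (xvec t h '' S)) + 1 = Fintype.card V := by
  have := hS.nonempty
  obtain ⟨u⟩ := hS.nonempty
  rw [connected_underlyingOn_iff_span_eq_ker.1 hS, Module.Dual.finrank_ker_add_one_of_ne_zero,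
    Module.finrank_fintype_fun_eq_card]
  intro hzero
  simpa [cutSum_single] using LinearMap.congr_fun hzero (Pi.single u 1)

theorem isSpanningTree_iff_linearIndepOn {T : Finset E}
    (hT : (underlyingOn t h (T : Set E)).Connected) :
    IsSpanningTree t h T ↔ LinearIndepOn ℝ (xvec t h) (T : Set E) := by
  rw [IsSpanningTree, LinearIndepOn, linearIndependent_iff_card_eq_finrank_span, Set.finrank,
    ← finrank_span_xvec_add_one hT, Set.image_eq_range]
  simp [hT]

theorem IsSpanningTree.linearIndepOn {T : Finset E} (hT : IsSpanningTree t h T) :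
    LinearIndepOn ℝ (xvec t h) (T : Set E) :=
  (isSpanningTree_iff_linearIndepOn hT.1).1 hT

end Spanning

theorem span_xvec_comap_boundary_ne_top [Fintype E] [Finite V]
    (hconn : (underlyingOn t h Set.univ).Connected) {S : Set E}
    (hS : ¬(underlyingOn t h S).Connected) :
    (Submodule.span ℝ (xvec t h '' S)).comap (boundary t h) ≠ ⊤ := by
  classical
  cases nonempty_fintype V
  have := hconn.nonempty
  contrapose! hS
  rw [connected_underlyingOn_iff_span_eq_ker] at hconn ⊢
  refine (span_xvec_le_ker_cutSum_univ S).antisymm ?_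
  rw [← hconn, Submodule.span_le]
  rintro _ ⟨f, -, rfl⟩
  rw [← boundary_single]
  exact Submodule.eq_top_iff'.1 hS (Pi.single f 1)

end EdgeVectors

theorem exists_isSpanningTree_subset [Fintype V] {S : Finset E}
    (hS : (underlyingOn t h (S : Set E)).Connected) : ∃ T ⊆ S, IsSpanningTree t h T := by
  classical
  have := hS.nonempty
  obtain ⟨b, hbS, -, hspan, hb⟩ := exists_linearIndepOn_extension
    (linearIndepOn_empty ℝ (xvec t h)) (Set.empty_subset (S : Set E))
  lift b to Finset E using S.finite_toSet.subset hbS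
  have hspan_eq : Submodule.span ℝ (xvec t h '' b) = Submodule.span ℝ (xvec t h '' S) :=
    (Submodule.span_mono (Set.image_mono hbS)).antisymm (Submodule.span_le.2 hspan)
  have hconn : (underlyingOn t h (b : Set E)).Connected := by
    rwa [connected_underlyingOn_iff_span_eq_ker, hspan_eq, ← connected_underlyingOn_iff_span_eq_ker]
  exact ⟨b, mod_cast hbS, (isSpanningTree_iff_linearIndepOn hconn).2 hb⟩

variable [DecidableEq V]

section Circuits

variable [Fintype E]

theorem eq_zero_of_boundary_eq_zero {S : Set E} (hS : LinearIndepOn ℝ (xvec t h) S) {φ : E → ℝ}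
    (hφ : boundary t h φ = 0) (hsupp : Function.support φ ⊆ S) : φ = 0 := by
  classical
  ext e
  by_contra he
  refine he (linearIndepOn_iff''.1 hS {i | φ i ≠ 0} φ (fun i hi => hsupp (by simpa using hi))
    (by simp) ?_ e (by simpa using he))
  rw [sum_filter_of_ne fun i _ hi => left_ne_zero_of_smul hi]
  exact hφ

theorem apply_eq_zero_or_one_or_neg_one_of_boundary_eq_zero [Finite V] {S : Set E}
    (hS : LinearIndepOn ℝ (xvec t h) S) {φ : E → ℝ} (hφ : boundary t h φ = 0) {f : E}
    (hf : φ f = 1) (hsupp : Function.support φ ⊆ insert f S) (e : E) :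
    φ e = 0 ∨ φ e = 1 ∨ φ e = -1 := by
  classical
  by_cases hef : e = f
  · exact .inr (.inl (hef ▸ hf))
  by_cases he : φ e = 0
  · exact .inl he
  have heS : e ∈ S := (hsupp he).resolve_left hef
  obtain ⟨U, hU⟩ := exists_cutSum_xvec_eq_single hS heS
  have hsum : φ e + cutSum U (xvec t h f) = 0 := by
    calc φ e + cutSum U (xvec t h f)
        = φ e * cutSum U (xvec t h e) + φ f * cutSum U (xvec t h f) := by simp [hU e heS, hf]
      _ = ∑ i, φ i * cutSum U (xvec t h i) := by
          rw [Fintype.sum_eq_add e f hef]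
          rintro i ⟨hie, hif⟩
          by_cases hi : φ i = 0
          · simp [hi]
          · simp [hU i ((hsupp hi).resolve_left hif), hie]
      _ = 0 := by rw [← dual_boundary_apply, hφ, map_zero]
  rw [cutSum_xvec] at hsum
  split_ifs at hsum
  · exact .inl (by linarith)
  · exact .inr (.inr (by linarith))
  · exact .inr (.inl (by linarith))
  · exact .inl (by linarith)

theorem IsSpanningTree.exists_circulation [Fintype V] {T : Finset E} (hT : IsSpanningTree t h T)
    {f : E} (hf : f ∉ T) :
    ∃ φ : E → ℝ, boundary t h φ = 0 ∧ φ f = 1 ∧ Function.support φ ⊆ insert f (T : Set E) := by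
  classical
  have := hT.1.nonempty
  have hmem : xvec t h f ∈ Submodule.span ℝ (xvec t h '' T) := by
    rw [connected_underlyingOn_iff_span_eq_ker.1 hT.1]
    exact span_xvec_le_ker_cutSum_univ Set.univ
      (Submodule.subset_span (Set.mem_image_of_mem _ (Set.mem_univ f)))
  obtain ⟨c, hc⟩ := (Submodule.mem_span_image_finset_iff_exists_fun' ℝ).1 hmem
  refine ⟨Pi.single f 1 - (T : Set E).indicator c, ?_, by simp [hf], ?_⟩
  · rw [map_sub, boundary_single, sub_eq_zero, ← hc, boundary_apply]
    simp [Set.indicator_apply]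
  · refine (Function.support_sub _ _).trans (Set.union_subset ?_ ?_)
    · exact Pi.support_single_subset.trans (by simp)
    · exact Set.support_indicator_subset.trans (Set.subset_insert _ _)

variable [DecidableEq E]

theorem isSignedCycle_of_forall_eq_smul {φ : E → ℝ} (hφ : boundary t h φ = 0) (hφ0 : φ ≠ 0)
    (hunit : ∀ e, φ e = 0 ∨ φ e = 1 ∨ φ e = -1)
    (hmin : ∀ ψ, boundary t h ψ = 0 → Function.support ψ ⊆ Function.support φ →
      ∃ a : ℝ, ψ = a • φ) :
    IsSignedCycle t h {e | φ e = 1} {e | φ e = -1} := by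
  have hmem (e : E) : e ∈ ({e | φ e = 1} : Finset E) ∪ ({e | φ e = -1} : Finset E) ↔ φ e ≠ 0 := by
    simp only [mem_union, mem_filter_univ]
    rcases hunit e with he | he | he <;> norm_num [he]
  have hchi : chiVec ({e | φ e = 1} : Finset E) ({e | φ e = -1} : Finset E) = φ := by
    ext e
    rcases hunit e with he | he | he <;> norm_num [chiVec, he]
  refine ⟨?_, ?_, by rwa [hchi], fun ψ hψ hψ0 hsupp e he => ?_⟩
  · refine disjoint_filter.2 fun e _ he => ?_
    norm_num [he]
  · obtain ⟨e, he⟩ := Function.ne_iff.1 hφ0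
    exact ⟨e, (hmem e).2 he⟩
  · obtain ⟨a, rfl⟩ := hmin ψ hψ fun e he => (hmem e).1 (hsupp e he)
    exact mul_ne_zero (left_ne_zero_of_smul hψ0) ((hmem e).1 he)

theorem IsSpanningTree.exists_isSignedCycle [Fintype V] {T : Finset E} (hT : IsSpanningTree t h T)
    {f : E} (hf : f ∉ T) : ∃ Cp Cm, IsSignedCycle t h Cp Cm ∧ Cp ∪ Cm ⊆ insert f T := by
  obtain ⟨φ, hφ, hφf, hsupp⟩ := hT.exists_circulation hf
  refine ⟨_, _, isSignedCycle_of_forall_eq_smul hφ ?_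
    (apply_eq_zero_or_one_or_neg_one_of_boundary_eq_zero hT.linearIndepOn hφ hφf hsupp) ?_, ?_⟩
  · rintro rfl
    simp at hφf
  · refine fun ψ hψ hψφ => ⟨ψ f, sub_eq_zero.1 ?_⟩
    refine eq_zero_of_boundary_eq_zero hT.linearIndepOn (by simp [hψ, hφ]) fun e he => ?_
    refine (hsupp fun hφe => he ?_).resolve_left ?_
    · have : ψ e = 0 := by_contra fun hψe => hψφ hψe hφe
      simp [hφe, this]
    · rintro rfl
      simp [hφf] at he
  · intro e he
    have he : φ e ≠ 0 := by
      rcases mem_union.1 he with he | he <;> norm_num [(mem_filter_univ e).1 he]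
    simpa using hsupp he

end Circuits

section Potential

theorem apply_nonneg_of_mem_rootPolyOn {S : Set E} {g : Module.Dual ℝ (V → ℝ)}
    (hg : ∀ e ∈ S, 0 ≤ g (xvec t h e)) {p : V → ℝ} (hp : p ∈ rootPolyOn t h S) : 0 ≤ g p := by
  refine convexHull_min ?_ ((convex_Ici (0 : ℝ)).linear_preimage g) hp
  rintro _ (rfl | ⟨e, he, rfl⟩)
  exacts [(map_zero g).ge, hg e he]

/-- `g` is a potential for the edge set `T` and the weight `w`: the reduced weight `w e - g (x_e)`
vanishes on `T` and is positive elsewhere. By linear programming duality, it certifies that the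
nonnegative combinations of the edge vectors of `T` are those of least weight. -/
def IsPotential (t h : E → V) (w : E → ℝ) (T : Finset E) (g : Module.Dual ℝ (V → ℝ)) : Prop :=
  (∀ e ∈ T, g (xvec t h e) = w e) ∧ ∀ e ∉ T, g (xvec t h e) < w e

theorem IsPotential.subset_of_mem_intrinsicInterior [Finite V] {w : E → ℝ} {T₁ T₂ : Finset E}
    {g₁ g₂ : Module.Dual ℝ (V → ℝ)} (h₁ : IsPotential t h w T₁ g₁) (h₂ : IsPotential t h w T₂ g₂)
    {p : V → ℝ} (hp₁ : p ∈ intrinsicInterior ℝ (rootPolyOn t h T₁)) (hp₂ : p ∈ rootPolyOn t h T₂) :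
    T₁ ⊆ T₂ := by
  cases nonempty_fintype V
  have hle {T : Finset E} {g} (hg : IsPotential t h w T g) (e : E) : g (xvec t h e) ≤ w e := by
    by_cases he : e ∈ T
    exacts [(hg.1 e he).le, (hg.2 e he).le]
  have hnonneg {y} (hy : y ∈ rootPolyOn t h T₁) : 0 ≤ (g₁ - g₂) y :=
    apply_nonneg_of_mem_rootPolyOn (fun e he => by simpa [h₁.1 e he] using hle h₂ e) hy
  have hnonpos : 0 ≤ (g₂ - g₁) p :=
    apply_nonneg_of_mem_rootPolyOn (fun e he => by simpa [h₂.1 e he] using hle h₁ e) hp₂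
  have hpzero : (g₁ - g₂) p = 0 :=
    le_antisymm (by simpa using hnonpos) (hnonneg (intrinsicInterior_subset hp₁))
  intro e he
  by_contra heT₂
  have hmem : xvec t h e ∈ rootPolyOn t h T₁ :=
    subset_convexHull ℝ _ (.inr (Set.mem_image_of_mem _ he))
  have heq := eq_of_isMinOn_of_mem_intrinsicInterior
    (fun y hy => hpzero.trans_le (hnonneg hy)) hp₁ hmem
  rw [hpzero, LinearMap.sub_apply, h₁.1 e he, sub_eq_zero] at heq
  exact (h₂.2 e heT₂).ne' heq

end Potential

section SignVector

variable [DecidableEq E] {Cp Cm : Finset E} {e : E}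

theorem sum_chiVec [Fintype E] (Cp Cm : Finset E) : ∑ e, chiVec Cp Cm e = #Cp - #Cm := by
  simp [chiVec]

theorem mem_of_chiVec_pos (he : 0 < chiVec Cp Cm e) : e ∈ Cp := by
  by_contra hCp
  have hle : chiVec Cp Cm e ≤ 0 := by
    simp only [chiVec, if_neg hCp]
    split_ifs <;> norm_num
  exact hle.not_gt he

theorem chiVec_eq_one (hdisj : Disjoint Cp Cm) (he : e ∈ Cp) : chiVec Cp Cm e = 1 := by
  simp [chiVec, he, disjoint_left.1 hdisj he]

theorem chiVec_eq_zero (he : e ∉ Cp ∪ Cm) : chiVec Cp Cm e = 0 := by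
  simp_all [chiVec]

end SignVector

section Signature

variable [Fintype E] [DecidableEq E] {σ : Set (Finset E × Finset E)}

theorem IsAcyclicSig.exists_weight (hac : IsAcyclicSig σ) :
    ∃ w : E → ℝ, ∀ q ∈ σ, 0 < chiVec q.1 q.2 ⬝ᵥ w := by
  classical
  have hv (a : σ → ℝ) (ha : 0 ≤ a) (ha0 : a ≠ 0) : ∑ q, a q • chiVec q.1.1 q.1.2 ≠ 0 := by
    obtain ⟨q, hq⟩ := Function.ne_iff.1 ha0
    have hne := hac σ.toFinset (fun p => if hp : p ∈ σ then a ⟨p, hp⟩ else 0) (by simp)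
      (fun p => by split_ifs with hp; exacts [ha ⟨p, hp⟩, le_rfl]) ⟨q, by simp, by simpa using hq⟩
    rw [← sum_set_coe] at hne
    simpa using hne
  obtain ⟨f, hf⟩ := exists_continuousLinearMap_forall_pos _ hv
  refine ⟨fun e => f fun i => if e = i then 1 else 0, fun q hq => ?_⟩
  exact (hf ⟨q, hq⟩).trans_eq (LinearMap.pi_apply_eq_sum_univ f.toLinearMap _)

theorem IsCircuitSignature.exists_mem_subset_insert [Fintype V] (hσ : IsCircuitSignature t h σ)
    {T : Finset E} (hT : IsSpanningTree t h T) {f : E} (hf : f ∉ T) :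
    ∃ q ∈ σ, q.1 ∪ q.2 ⊆ insert f T := by
  obtain ⟨Cp, Cm, hC, hsub⟩ := hT.exists_isSignedCycle hf
  by_cases hmem : (Cm, Cp) ∈ σ
  · exact ⟨_, hmem, by rwa [union_comm]⟩
  · exact ⟨_, (hσ.2 Cp Cm hC).2 hmem, hsub⟩

theorem exists_isPotential_of_mem_treeSet [Fintype V] (hσ : IsCircuitSignature t h σ) {w : E → ℝ}
    (hw : ∀ q ∈ σ, 0 < chiVec q.1 q.2 ⬝ᵥ w) {T : Finset E} (hT : T ∈ treeSet t h σ) :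
    ∃ g, IsPotential t h w T g := by
  obtain ⟨g, hg⟩ := exists_dual_forall_apply_eq hT.1.linearIndepOn w
  refine ⟨g, hg, fun f hf => ?_⟩
  obtain ⟨q, hq, hqT⟩ := hσ.exists_mem_subset_insert hT.1 hf
  obtain ⟨hdisj, -, hcirc, -⟩ := hσ.1 q hq
  have hg0 : ∑ e, chiVec q.1 q.2 e * g (xvec t h e) = 0 := by
    rw [← dual_boundary_apply, show boundary t h (chiVec q.1 q.2) = 0 from hcirc, map_zero]
  refine sub_pos.1 ?_
  calc 0 < chiVec q.1 q.2 ⬝ᵥ w := hw q hq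
    _ = ∑ e, chiVec q.1 q.2 e * (w e - g (xvec t h e)) := by
      simp only [mul_sub, sum_sub_distrib, hg0, sub_zero, dotProduct]
    _ = chiVec q.1 q.2 f * (w f - g (xvec t h f)) := by
      refine Fintype.sum_eq_single f fun e hef => ?_
      by_cases he : e ∈ q.1 ∪ q.2
      · rw [hg e ((mem_insert.1 (hqT he)).resolve_left hef), sub_self, mul_zero]
      · rw [chiVec_eq_zero he, zero_mul]
    _ = w f - g (xvec t h f) := by
      rw [chiVec_eq_one hdisj (hT.2 f hf q.1 q.2 hq hqT), one_mul]

theorem mem_treeSet_of_connected [Fintype V] (hσ : IsCircuitSignature t h σ) {S : Finset E}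
    (hS : (underlyingOn t h (S : Set E)).Connected) (hσS : ∀ q ∈ σ, ¬q.1 ⊆ S) :
    S ∈ treeSet t h σ := by
  obtain ⟨T, hTS, hT⟩ := exists_isSpanningTree_subset hS
  have hleave {f : E} {q} (hq : q ∈ σ) (hqT : q.1 ∪ q.2 ⊆ insert f T) : f ∈ q.1 ∧ f ∉ S := by
    obtain ⟨e, he, heS⟩ := not_subset.1 (hσS q hq)
    obtain rfl := (mem_insert.1 (hqT (mem_union_left _ he))).resolve_right fun heT => heS (hTS heT)
    exact ⟨he, heS⟩
  obtain rfl : T = S := hTS.antisymm fun f hfS => by_contra fun hfT => by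
    obtain ⟨q, hq, hqT⟩ := hσ.exists_mem_subset_insert hT hfT
    exact (hleave hq hqT).2 hfS
  exact ⟨hT, fun f _ Cp Cm hq hqT => (hleave hq hqT).1⟩

theorem exists_mem_treeSet_of_generic [Fintype V] (hσ : IsCircuitSignature t h σ)
    (hlap : ∀ q ∈ σ, #q.2 ≤ #q.1) {w : E → ℝ} (hw : ∀ q ∈ σ, 0 < chiVec q.1 q.2 ⬝ᵥ w)
    {l : E → ℝ} (hl : l ∈ cornerSimplex E)
    (hgen : ∀ S : Set E, ¬(underlyingOn t h S).Connected →
      boundary t h l ∉ Submodule.span ℝ (xvec t h '' S)) :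
    ∃ T ∈ treeSet t h σ, boundary t h l ∈ rootPolyOn t h T := by
  obtain ⟨m, hm, hml, hmin⟩ := exists_isMinOn_cornerSimplex (boundary t h) w hl
  set S : Finset E := {e | m e ≠ 0}
  have hmS : Function.support m ⊆ S := fun e he => by simpa [S] using he
  have hconn : (underlyingOn t h (S : Set E)).Connected := by
    refine not_not.1 fun hS => hgen S hS ?_
    rw [← hml]
    exact boundary_mem_span hmS
  have hσS (q) (hq : q ∈ σ) : ¬q.1 ⊆ S := by
    have hlong : 0 ≤ ∑ e, chiVec q.1 q.2 e := by
      rw [sum_chiVec, sub_nonneg]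
      exact mod_cast hlap q hq
    obtain ⟨e, he, hme⟩ := exists_eq_zero_of_isMinOn_cornerSimplex hm hmin (hσ.1 q hq).2.2.1 hlong
      (hw q hq)
    exact not_subset.2 ⟨e, mem_of_chiVec_pos he, by simpa [S] using hme⟩
  exact ⟨S, mem_treeSet_of_connected hσ hconn hσS,
    mem_convexHull_zero_union_image_iff.2 ⟨m, hm, hmS, hml⟩⟩

theorem rootPolyOn_univ_subset_biUnion [Fintype V] (hconn : (underlyingOn t h Set.univ).Connected)
    (hσ : IsCircuitSignature t h σ) (hac : IsAcyclicSig σ) (hlap : ∀ q ∈ σ, #q.2 ≤ #q.1) :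
    rootPolyOn t h Set.univ ⊆ ⋃ T ∈ treeSet t h σ, rootPolyOn t h T := by
  obtain ⟨w, hw⟩ := hac.exists_weight
  have hclosed : IsClosed (boundary t h ⁻¹' ⋃ T ∈ treeSet t h σ, rootPolyOn t h T) :=
    ((Set.toFinite _).isClosed_biUnion fun T _ =>
      Set.Finite.isClosed_convexHull ℝ (Set.toFinite _)).preimage
        (boundary t h).continuous_on_pi
  let p (S : {S : Set E // ¬(underlyingOn t h S).Connected}) : Submodule ℝ (E → ℝ) :=
    (Submodule.span ℝ (xvec t h '' S.1)).comap (boundary t h)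
  have hgeneric : cornerSimplex E \ ⋃ S, (p S : Set (E → ℝ)) ⊆
      boundary t h ⁻¹' ⋃ T ∈ treeSet t h σ, rootPolyOn t h T := by
    rintro l ⟨hl, hlp⟩
    rw [Set.mem_iUnion, not_exists] at hlp
    simpa using exists_mem_treeSet_of_generic hσ hlap hw hl fun S hS => hlp ⟨S, hS⟩
  intro x hx
  obtain ⟨l, hl, -, rfl⟩ := mem_convexHull_zero_union_image_iff.1 hx
  exact closure_minimal hgeneric hclosed <| subset_closure_diff_iUnion_submodule
    convex_cornerSimplex interior_cornerSimplex_nonempty p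
    (fun S => span_xvec_comap_boundary_ne_top hconn S.2) hl

end Signature

end Digraph

/-- for a weakly connected digraph `D` and an acyclic, long arc positive
circuit signature `σ`, the simplices `Q̃_T` for `T ∈ tree(D,σ)` form a dissection of
`Q̃_D`: pairwise disjoint relative interiors, and union equal to `Q̃_D`. -/
theorem stmt8 {V E : Type*} [Fintype V] [Fintype E] [DecidableEq V] [DecidableEq E]
    (t h : E → V) (hconn : (underlyingOn t h Set.univ).Connected)
    (σ : Set (Finset E × Finset E))
    (hσ : IsCircuitSignature t h σ) (hac : IsAcyclicSig σ)
    (hlap : ∀ q ∈ σ, q.2.card ≤ q.1.card) :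
    ((treeSet t h σ).Pairwise fun T1 T2 =>
      Disjoint (intrinsicInterior ℝ (rootPolyOn t h ↑T1))
        (intrinsicInterior ℝ (rootPolyOn t h ↑T2))) ∧
    (⋃ T ∈ treeSet t h σ, rootPolyOn t h ↑T) = rootPolyOn t h Set.univ := by
  refine ⟨fun T₁ hT₁ T₂ hT₂ hne => ?_, (Set.iUnion₂_subset fun T _ => ?_).antisymm
    (rootPolyOn_univ_subset_biUnion hconn hσ hac hlap)⟩
  · obtain ⟨w, hw⟩ := hac.exists_weight
    obtain ⟨g₁, hg₁⟩ := exists_isPotential_of_mem_treeSet hσ hw hT₁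
    obtain ⟨g₂, hg₂⟩ := exists_isPotential_of_mem_treeSet hσ hw hT₂
    refine Set.disjoint_left.2 fun p hp₁ hp₂ => hne (Subset.antisymm ?_ ?_)
    · exact hg₁.subset_of_mem_intrinsicInterior hg₂ hp₁ (intrinsicInterior_subset hp₂)
    · exact hg₂.subset_of_mem_intrinsicInterior hg₁ hp₂ (intrinsicInterior_subset hp₁)
  · exact convexHull_mono (Set.union_subset_union_right _ (Set.image_mono (Set.subset_univ _)))
end

section
/- Stanley's monotonicity theorem: if P ⊆ Q are lattice polytopes in ℝ^n, then each coefficient of the h*-polynomial of P is at most the corresponding coefficient of the h*-polynomial of Q. -/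
open Finset Pointwise

/-!
Put the polytope at height one and pass to the cone over it: the `h*`-polynomial is the numerator
of the generating function that counts the lattice points of the cone by height. A generic height
function on the generators induces a regular triangulation of the cone, and a generic point `z` of
the cone makes every cell half-open, so that the cells partition the cone. A half-open simplicial
cone is the disjoint union of the translates of its fundamental parallelepiped, hence the
`i`-th coefficient of the numerator counts the lattice points of height `i` in the half-open
parallelepipeds of the cells. In particular it is nonnegative.

It remains to compare these counts when one generator `v` is added. If `v` lies in the span of the
old generators, lift it so high that every old cell survives: the new numerator has the old terms
and some further nonnegative ones. Otherwise every old cell is joined with `v`; replacing `z` by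
`z + v` makes each new parallelepiped contain the old one.
-/

namespace StanleyMonotonicity

open Filter Topology Module PointedCone Submodule

variable {E : Type*} [AddCommGroup E] [Module ℝ E]

section LinearAlgebra

lemma exists_apply_eq_one_of_notMem {W : Submodule ℝ E} {v : E} (hv : v ∉ W) :
    ∃ f : Dual ℝ E, f v = 1 ∧ ∀ x ∈ W, f x = 0 := by
  obtain ⟨f, hfv, hfW⟩ := exists_le_ker_of_notMem hv
  refine ⟨(f v)⁻¹ • f, by simp [hfv], fun x hx => ?_⟩
  simp [LinearMap.mem_ker.mp (hfW hx)]

lemma exists_dual_apply_eq {F : Set E} (hF : LinearIndepOn ℝ id F) (w : E → ℝ) :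
    ∃ ℓ : Dual ℝ E, ∀ i ∈ F, ℓ i = w i := by
  refine ⟨(Basis.extend hF).constr ℝ fun i => w i, fun i hi => ?_⟩
  have hb := (Basis.extend hF).constr_basis ℝ (fun i => w i)
    ⟨i, hF.subset_extend _ hi⟩
  simpa using hb

lemma mem_of_mem_span_of_subset {F S : Set E} (hF : LinearIndepOn ℝ id F) (hSF : S ⊆ F)
    {i : E} (hiF : i ∈ F) (hiS : i ∈ span ℝ S) : i ∈ S := by
  by_contra hi
  have hins : LinearIndepOn ℝ id (insert i S) := hF.mono (Set.insert_subset hiF hSF)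
  exact hins.notMem_span_of_insert hi (by simpa using hiS)

lemma mem_hull_finset {F : Finset E} {x : E} :
    x ∈ hull ℝ (F : Set E) ↔ ∃ c : E → ℝ, (∀ i ∈ F, 0 ≤ c i) ∧ ∑ i ∈ F, c i • i = x := by
  constructor
  · intro hx
    obtain ⟨c, -, hc⟩ := mem_span_finset.mp hx
    exact ⟨fun i => c i, fun i _ => (c i).2, hc⟩
  · rintro ⟨c, hc, rfl⟩
    exact sum_mem fun i hi => PointedCone.smul_mem _ (hc i hi) (PointedCone.subset_hull hi)

lemma exists_coordinates [DecidableEq E] {F : Finset E} (hF : LinearIndepOn ℝ id (F : Set E)) :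
    ∃ c : E → Dual ℝ E, (∀ i ∈ F, ∀ j ∈ F, c i j = if i = j then 1 else 0) ∧
      ∀ x, x ∈ hull ℝ (F : Set E) ↔ x ∈ span ℝ (F : Set E) ∧ ∀ i ∈ F, 0 ≤ c i x := by
  choose c hc using fun i => exists_dual_apply_eq hF fun j => if i = j then 1 else 0
  have hcoord (d : E → ℝ) {i : E} (hi : i ∈ F) : c i (∑ j ∈ F, d j • j) = d i := by
    rw [map_sum, sum_eq_single_of_mem i hi]
    · simp [hc i i hi]
    · intro j hj hji
      simp [hc i j hj, hji.symm]
  refine ⟨c, fun i _ => hc i, fun x => ⟨fun hx => ⟨hull_le_span ℝ _ hx, ?_⟩, ?_⟩⟩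
  · obtain ⟨d, hd, rfl⟩ := mem_hull_finset.mp hx
    intro i hi
    simpa only [hcoord d hi] using hd i hi
  · rintro ⟨hx, hpos⟩
    obtain ⟨d, -, rfl⟩ := mem_span_finset.mp hx
    exact mem_hull_finset.mpr ⟨d, fun i hi => hcoord d hi ▸ hpos i hi, rfl⟩

lemma apply_nonneg_of_mem_hull {S : Set E} {φ : Dual ℝ E} (hφ : ∀ a ∈ S, 0 ≤ φ a) {x : E}
    (hx : x ∈ hull ℝ S) : 0 ≤ φ x := by
  have hle : hull ℝ S ≤ (PointedCone.positive ℝ ℝ).comap φ := Submodule.span_le.mpr hφ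
  exact hle hx

lemma mem_hull_filter_of_apply_nonpos {F : Finset E} {φ : Dual ℝ E} (hφ : ∀ i ∈ F, 0 ≤ φ i)
    {x : E} (hx : x ∈ hull ℝ (F : Set E)) (hφx : φ x ≤ 0) :
    x ∈ hull ℝ (({i ∈ F | φ i = 0} : Finset E) : Set E) := by
  obtain ⟨c, hc, rfl⟩ := mem_hull_finset.mp hx
  refine mem_hull_finset.mpr ⟨c, fun i hi => hc i (mem_filter.mp hi).1, ?_⟩
  have hterm : ∀ i ∈ F, 0 ≤ c i * φ i := fun i hi => mul_nonneg (hc i hi) (hφ i hi)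
  have hsum : ∑ i ∈ F, c i * φ i = 0 :=
    le_antisymm (by simpa using hφx) (sum_nonneg hterm)
  refine sum_filter_of_ne fun i hi hci => ?_
  have hprod := (sum_eq_zero_iff_of_nonneg hterm).mp hsum i hi
  exact (mul_eq_zero.mp hprod).resolve_left fun h => hci (by rw [h, zero_smul])

lemma mem_hull_of_add_smul_mem_hull_insert {W : Submodule ℝ E} {F : Set E} (hF : F ⊆ W)
    {v : E} (hv : v ∉ W) {y : E} (hy : y ∈ W) {t : ℝ}
    (hyt : y + t • v ∈ hull ℝ (insert v F)) : 0 ≤ t ∧ y ∈ hull ℝ F := by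
  obtain ⟨f, hfv, hfW⟩ := exists_apply_eq_one_of_notMem hv
  obtain ⟨⟨a, ha⟩, u, hu, hau⟩ := mem_span_insert.mp hyt
  have huW : u ∈ W := Submodule.span_le.mpr hF (hull_le_span ℝ F hu)
  replace hau : y + t • v = a • v + u := hau
  have hta : t = a := by simpa [hfW, hy, huW, hfv] using congrArg f hau
  rw [hta, add_comm, add_left_cancel_iff] at hau
  exact ⟨hta ▸ ha, hau ▸ hu⟩

lemma mem_span_of_mem_span_insert {W : Submodule ℝ E} {S : Set E} (hS : S ⊆ W) {v : E}
    (hv : v ∉ W) {x : E} (hx : x ∈ W) (hxS : x ∈ span ℝ (insert v S)) : x ∈ span ℝ S := by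
  obtain ⟨a, u, hu, rfl⟩ := mem_span_insert.mp hxS
  have hav : a • v ∈ W := (W.add_mem_iff_left (Submodule.span_le.mpr hS hu)).mp hx
  have ha : a = 0 := by
    by_contra ha
    exact hv ((W.smul_mem_iff ha).mp hav)
  simpa [ha] using hu

lemma span_eq_vectorSpan_sup_span_singleton {A : Set E} {p : E} (hp : p ∈ A) :
    span ℝ A = vectorSpan ℝ A ⊔ span ℝ {p} := by
  apply le_antisymm
  · refine Submodule.span_le.mpr fun a ha => ?_
    rw [← sub_add_cancel a p]
    exact Submodule.add_mem_sup (vsub_mem_vectorSpan ℝ ha hp) (mem_span_singleton_self p)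
  · refine sup_le (Submodule.span_le.mpr ?_) (span_mono (Set.singleton_subset_iff.mpr hp))
    rintro _ ⟨a, ha, b, hb, rfl⟩
    exact Submodule.sub_mem _ (subset_span ha) (subset_span hb)

lemma finrank_span_eq_finrank_vectorSpan_add_one [FiniteDimensional ℝ E] {ht : Dual ℝ E}
    {A : Set E} (hA : A.Nonempty) (ht_one : ∀ a ∈ A, ht a = 1) :
    finrank ℝ (span ℝ A) = finrank ℝ (vectorSpan ℝ A) + 1 := by
  obtain ⟨p, hp⟩ := hA
  have hker : vectorSpan ℝ A ≤ ht.ker := by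
    refine Submodule.span_le.mpr ?_
    rintro _ ⟨a, ha, b, hb, rfl⟩
    simp [ht_one a ha, ht_one b hb]
  have hpA : p ∉ vectorSpan ℝ A := fun h => by
    simpa [ht_one p hp] using hker h
  rw [span_eq_vectorSpan_sup_span_singleton hp]
  exact finrank_sup_span_singleton hpA

end LinearAlgebra

section RightNeighbourhood

lemma eventually_add_smul_notMem (W : Submodule ℝ E) (x : E) {z : E} (hz : z ∉ W) :
    ∀ᶠ ε : ℝ in 𝓝[>] 0, x + ε • z ∉ W := by
  have hsub : {ε : ℝ | x + ε • z ∈ W}.Subsingleton := by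
    intro ε hε δ hδ
    by_contra hne
    have hdiff : (ε - δ) • z ∈ W := by
      have h := W.sub_mem hε hδ
      rwa [add_sub_add_left_eq_sub, ← sub_smul] at h
    exact hz ((W.smul_mem_iff (sub_ne_zero.mpr hne)).mp hdiff)
  have hcof : ∀ᶠ ε : ℝ in cofinite, x + ε • z ∉ W := by simpa using hsub.finite
  exact hcof.filter_mono
    ((nhdsWithin_mono _ fun _ => ne_of_gt).trans (nhdsNE_le_cofinite _))

lemma eventually_add_smul_mem_of_frequently {C : Set E} (hC : Convex ℝ C) {x z : E}
    (h : ∃ᶠ ε : ℝ in 𝓝[>] 0, x + ε • z ∈ C) : ∀ᶠ ε : ℝ in 𝓝[>] 0, x + ε • z ∈ C := by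
  have hord : {ε : ℝ | x + ε • z ∈ C}.OrdConnected := by
    have hline : AffineMap.lineMap x (x + z) ⁻¹' C = {ε : ℝ | x + ε • z ∈ C} := by
      ext ε
      simp [AffineMap.lineMap_apply, add_comm]
    exact hline ▸ (hC.affine_preimage _).ordConnected
  obtain ⟨b, hbC, hb⟩ := (h.and_eventually self_mem_nhdsWithin).exists
  filter_upwards [Ioo_mem_nhdsGT hb] with ε hε
  obtain ⟨a, haC, ha⟩ := (h.and_eventually (Ioo_mem_nhdsGT hε.1)).exists
  exact hord.out haC hbC ⟨ha.2.le, hε.2.le⟩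

lemma eventually_one_add_mul_pos (a : ℝ) : ∀ᶠ ε : ℝ in 𝓝[>] 0, 0 < 1 + ε * a := by
  have hcont : ContinuousAt (fun ε : ℝ => 1 + ε * a) 0 := by fun_prop
  exact (hcont.eventually (lt_mem_nhds (by simp))).filter_mono nhdsWithin_le_nhds

lemma nonneg_of_eventually_add_mul_nonneg {a b : ℝ} (h : ∀ᶠ ε : ℝ in 𝓝[>] 0, 0 ≤ a + ε * b) :
    0 ≤ a := by
  have hcont : ContinuousAt (fun ε : ℝ => a + ε * b) 0 := by fun_prop
  have hlim : Tendsto (fun ε : ℝ => a + ε * b) (𝓝[>] 0) (𝓝 a) := by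
    simpa using hcont.tendsto.mono_left nhdsWithin_le_nhds
  exact ge_of_tendsto hlim h

lemma exists_eventually_forall_apply_ne_zero {κ : Type*} (s : Finset κ) {φ : κ → Dual ℝ E}
    (hφ : ∀ k ∈ s, φ k ≠ 0) (v : E) :
    ∃ u : E, ∀ᶠ ε : ℝ in 𝓝[>] 0, ∀ k ∈ s, φ k (v + ε • u) ≠ 0 := by
  obtain ⟨u, hu⟩ := Dual.exists_forall_ne_zero_of_forall_exists (fun k : s => φ k)
    fun k => DFunLike.ne_iff.mp (hφ k k.2)
  refine ⟨u, (eventually_all_finset s).mpr fun k hk => ?_⟩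
  exact eventually_add_smul_notMem (φ k).ker v (hu ⟨k, hk⟩)

end RightNeighbourhood

section Genericity

/-- A height function `w` on a configuration `A` is generic when a linear functional can only
agree with it on a linearly independent subset of `A`. This makes the regular subdivision induced
by `w` simplicial. -/
def IsGenericHeight (A : Finset E) (w : E → ℝ) : Prop :=
  ∀ ℓ : Dual ℝ E, LinearIndepOn ℝ id {a | a ∈ A ∧ ℓ a = w a}

/-- A point `z` is generic for a configuration `A` when no subset of `A` contains `z` in its
linear span unless it spans all of `A`. Such a point lies on none of the walls of the subdivisions
of the cone over `A`. -/
def IsGenericPoint (A : Finset E) (z : E) : Prop :=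
  ∀ S ⊆ A, z ∈ span ℝ (S : Set E) → (A : Set E) ⊆ span ℝ (S : Set E)

variable {A B F : Finset E} {w : E → ℝ} {v x y z : E}

lemma IsGenericHeight.mono (hw : IsGenericHeight B w) (hAB : A ⊆ B) : IsGenericHeight A w :=
  fun ℓ => (hw ℓ).mono fun _ ha => ⟨hAB ha.1, ha.2⟩

lemma IsGenericPoint.mono (hz : IsGenericPoint B z) (hAB : A ⊆ B) : IsGenericPoint A z :=
  fun S hS hzS => (Finset.coe_subset.mpr hAB).trans (hz S (hS.trans hAB) hzS)

lemma IsGenericPoint.eq_of_subset (hy : IsGenericPoint A y) (hFA : F ⊆ A)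
    (hF : LinearIndepOn ℝ id (F : Set E)) {S : Finset E} (hSF : S ⊆ F)
    (hyS : y ∈ span ℝ (S : Set E)) : S = F :=
  hSF.antisymm fun _ hi => mem_of_mem_span_of_subset hF (mod_cast hSF) hi
    (hy S (hSF.trans hFA) hyS (hFA hi))

lemma IsGenericPoint.eventually_add_smul (hz : IsGenericPoint A z) (x : E) :
    ∀ᶠ ε : ℝ in 𝓝[>] 0, IsGenericPoint A (x + ε • z) := by
  have hall : ∀ᶠ ε : ℝ in 𝓝[>] 0, ∀ S ∈ A.powerset,
      x + ε • z ∈ span ℝ (S : Set E) → (A : Set E) ⊆ span ℝ (S : Set E) := by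
    refine (eventually_all_finset _).mpr fun S hS => ?_
    by_cases hzS : z ∈ span ℝ (S : Set E)
    · exact .of_forall fun _ _ => hz S (mem_powerset.mp hS) hzS
    · exact (eventually_add_smul_notMem _ x hzS).mono fun _ hε hmem => absurd hmem hε
  exact hall.mono fun ε hε S hS => hε S (mem_powerset.mpr hS)

lemma IsGenericPoint.add_insert [DecidableEq E] (hz : IsGenericPoint A z)
    (hzA : z ∈ span ℝ (A : Set E)) (hv : v ∉ span ℝ (A : Set E)) :
    IsGenericPoint (insert v A) (z + v) := by
  intro S hS hzS
  have hvS : v ∈ S := by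
    by_contra hvS
    have hSA : S ⊆ A := (subset_insert_iff_of_notMem hvS).mp hS
    have hsum := span_mono (R := ℝ) (Finset.coe_subset.mpr hSA) hzS
    exact hv ((Submodule.add_mem_iff_right _ hzA).mp hsum)
  obtain ⟨R, hvR, rfl⟩ : ∃ R, v ∉ R ∧ insert v R = S :=
    ⟨S.erase v, notMem_erase v S, insert_erase hvS⟩
  have hRA : R ⊆ A := (insert_subset_insert_iff hvR).mp hS
  have hvspan : v ∈ span ℝ (↑(insert v R) : Set E) := subset_span hvS
  have hzR : z ∈ span ℝ (insert v (R : Set E)) := by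
    simpa using (Submodule.add_mem_iff_left _ hvspan).mp hzS
  have hA : (A : Set E) ⊆ span ℝ (R : Set E) :=
    hz R hRA (mem_span_of_mem_span_insert
      ((Finset.coe_subset.mpr hRA).trans subset_span) hv hzA hzR)
  rw [coe_insert, Set.insert_subset_iff]
  exact ⟨hvspan, hA.trans (span_mono (by simp))⟩

lemma exists_eventually_isGenericHeight (A : Finset E) (w : E → ℝ) :
    ∃ u : E → ℝ, ∀ᶠ ε : ℝ in 𝓝[>] 0, IsGenericHeight A (w + ε • u) := by
  classical
  have hrel : ∀ D : Finset E, ¬ LinearIndepOn ℝ id (D : Set E) →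
      ∃ d : E → ℝ, ∑ i ∈ D, d i • i = 0 ∧ ∃ i ∈ D, d i ≠ 0 := by
    intro D hD
    simpa [linearIndepOn_finset_iff] using hD
  choose! d hd0 hdne using hrel
  let φ (D : Finset E) : Dual ℝ (E → ℝ) := ∑ i ∈ D, d D i • LinearMap.proj i
  have hφ (D : Finset E) (w : E → ℝ) : φ D w = ∑ i ∈ D, d D i * w i := by simp [φ]
  let dependent := A.powerset.filter fun D : Finset E => ¬ LinearIndepOn ℝ id (D : Set E)
  have hφne : ∀ D ∈ dependent, φ D ≠ 0 := by
    intro D hD hzero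
    obtain ⟨i, hi, hdi⟩ := hdne D (mem_filter.mp hD).2
    apply hdi
    simpa [hφ, Pi.single_apply, hi] using LinearMap.congr_fun hzero (Pi.single i 1)
  obtain ⟨u, hu⟩ := exists_eventually_forall_apply_ne_zero dependent hφne w
  refine ⟨u, hu.mono fun ε hε ℓ => ?_⟩
  by_contra hdep
  let D : Finset E := {a ∈ A | ℓ a = (w + ε • u) a}
  have hD : ¬ LinearIndepOn ℝ id (D : Set E) := by simpa [D] using hdep
  apply hε D (mem_filter.mpr ⟨mem_powerset.mpr (filter_subset _ _), hD⟩)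
  calc φ D (w + ε • u) = ∑ i ∈ D, d D i * ℓ i := by
        rw [hφ]
        exact sum_congr rfl fun i hi => by rw [(mem_filter.mp hi).2]
    _ = ℓ (∑ i ∈ D, d D i • i) := by simp
    _ = 0 := by rw [hd0 D hD, map_zero]

lemma exists_isGenericHeight_insert [DecidableEq E] (hv : v ∉ A) :
    ∃ w : E → ℝ, IsGenericHeight (insert v A) w ∧
      ∀ F ⊆ A, v ∈ span ℝ (F : Set E) →
        ∀ ℓ : Dual ℝ E, (∀ i ∈ F, ℓ i = w i) → ℓ v < w v := by
  have hcomb : ∀ F : Finset E, v ∈ span ℝ (F : Set E) → ∃ d : E → ℝ, ∑ i ∈ F, d i • i = v :=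
    fun F hF => (mem_span_finset.mp hF).imp fun _ h => h.2
  choose! d hd using hcomb
  obtain ⟨u, hu⟩ := exists_eventually_isGenericHeight (insert v A) (Pi.single v 1)
  have hlift : ∀ᶠ ε : ℝ in 𝓝[>] 0, ∀ F ∈ A.powerset,
      0 < 1 + ε * (u v - ∑ i ∈ F, d F i * u i) :=
    (eventually_all_finset _).mpr fun F _ => eventually_one_add_mul_pos _
  obtain ⟨ε, hgen, hpos⟩ := (hu.and hlift).exists
  refine ⟨_, hgen, fun F hFA hvF ℓ hℓ => ?_⟩
  have hℓv : ℓ v = ε * ∑ i ∈ F, d F i * u i := by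
    nth_rw 1 [← hd F hvF]
    simp only [map_sum, map_smul, smul_eq_mul, mul_sum]
    refine sum_congr rfl fun i hi => ?_
    have hiv : i ≠ v := ne_of_mem_of_not_mem (hFA hi) hv
    rw [hℓ i hi]
    simp [hiv, mul_left_comm]
  have hw : (Pi.single v 1 + ε • u : E → ℝ) v = 1 + ε * u v := by simp
  linarith [hpos F (mem_powerset.mpr hFA)]

lemma exists_isGenericPoint (hB : (B : Set E) ⊆ span ℝ (A : Set E)) :
    ∃ z ∈ hull ℝ (A : Set E), IsGenericPoint B z := by
  classical
  have hsep : ∀ S : Finset E, ¬ (B : Set E) ⊆ span ℝ (S : Set E) →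
      ∃ a ∈ A, ∃ f : Dual ℝ E, f a = 1 ∧ ∀ x ∈ span ℝ (S : Set E), f x = 0 := by
    intro S hS
    obtain ⟨a, haA, haS⟩ := Set.not_subset.mp fun hA =>
      hS (hB.trans (Submodule.span_le.mpr hA))
    exact ⟨a, haA, exists_apply_eq_one_of_notMem haS⟩
  choose! a haA f hfa hfS using hsep
  let combine : (E → ℝ) →ₗ[ℝ] E := ∑ i ∈ A, (LinearMap.proj i).smulRight i
  have hcombine (c : E → ℝ) : combine c = ∑ i ∈ A, c i • i := by simp [combine]
  let walls := B.powerset.filter fun S : Finset E => ¬ (B : Set E) ⊆ span ℝ (S : Set E)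
  have hne : ∀ S ∈ walls, f S ∘ₗ combine ≠ 0 := by
    intro S hSwall hzero
    have hS := (mem_filter.mp hSwall).2
    have h := LinearMap.congr_fun hzero (Pi.single (a S) 1)
    simp [hcombine, Pi.single_apply, haA S hS, hfa S hS] at h
  obtain ⟨u, hu⟩ := exists_eventually_forall_apply_ne_zero walls hne 1
  have hpos : ∀ᶠ ε : ℝ in 𝓝[>] 0, ∀ i ∈ A, 0 < 1 + ε * u i :=
    (eventually_all_finset A).mpr fun i _ => eventually_one_add_mul_pos _
  obtain ⟨ε, hgen, hε⟩ := (hu.and hpos).exists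
  refine ⟨combine (1 + ε • u), ?_, fun S hS hz => ?_⟩
  · exact mem_hull_finset.mpr ⟨_, fun i hi => (hε i hi).le, (hcombine _).symm⟩
  · by_contra hBS
    exact hgen S (mem_filter.mpr ⟨mem_powerset.mpr hS, hBS⟩) (hfS S hBS _ hz)

end Genericity

section ConicCombinations

variable {A F : Finset E} {ht : Dual ℝ E} {y : E}

lemma exists_sub_smul_mem_hull_erase [DecidableEq E] (hy : y ∈ hull ℝ (F : Set E)) {d : E → ℝ}
    (hd : ∃ i ∈ F, 0 < d i) :
    ∃ t : ℝ, 0 ≤ t ∧ ∃ i ∈ F, y - t • ∑ j ∈ F, d j • j ∈ hull ℝ (↑(F.erase i) : Set E) := by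
  obtain ⟨c, hc, rfl⟩ := mem_hull_finset.mp hy
  obtain ⟨i, hi, hmin⟩ := exists_min_image {j ∈ F | 0 < d j} (fun j => c j / d j)
    (filter_nonempty_iff.mpr hd)
  obtain ⟨hiF, hdi⟩ := mem_filter.mp hi
  have ht : 0 ≤ c i / d i := div_nonneg (hc i hiF) hdi.le
  refine ⟨c i / d i, ht, i, hiF, ?_⟩
  refine mem_hull_finset.mpr ⟨fun j => c j - c i / d i * d j, fun j hj => ?_, ?_⟩
  · have hjF := mem_of_mem_erase hj
    rcases le_or_gt (d j) 0 with hdj | hdj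
    · exact sub_nonneg.mpr ((mul_nonpos_of_nonneg_of_nonpos ht hdj).trans (hc j hjF))
    · exact sub_nonneg.mpr ((le_div_iff₀ hdj).mp (hmin j (mem_filter.mpr ⟨hjF, hdj⟩)))
  · have hvanish : (c i - c i / d i * d i) • i = 0 := by
      rw [div_mul_cancel₀ _ hdi.ne', sub_self, zero_smul]
    rw [sum_erase F (f := fun j => (c j - c i / d i * d j) • j) hvanish, smul_sum,
      ← sum_sub_distrib]
    simp only [sub_smul, mul_smul]

lemma exists_linearIndepOn_mem_hull (ht_one : ∀ a ∈ A, ht a = 1)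
    (hy : y ∈ hull ℝ (A : Set E)) :
    ∃ F ⊆ A, LinearIndepOn ℝ id (F : Set E) ∧ y ∈ hull ℝ (F : Set E) := by
  classical
  obtain ⟨F, hF, hmin⟩ := exists_min_image
    (A.powerset.filter fun F : Finset E => y ∈ hull ℝ (F : Set E)) card
    ⟨A, mem_filter.mpr ⟨mem_powerset_self A, hy⟩⟩
  obtain ⟨hFA, hyF⟩ := mem_filter.mp hF
  rw [mem_powerset] at hFA
  refine ⟨F, hFA, ?_, hyF⟩
  by_contra hdep
  obtain ⟨d, hd0, hdne⟩ : ∃ d : E → ℝ, ∑ i ∈ F, d i • i = 0 ∧ ∃ i ∈ F, d i ≠ 0 := by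
    simpa [linearIndepOn_finset_iff] using hdep
  have hdsum : ∑ i ∈ F, d i = 0 := by
    calc ∑ i ∈ F, d i = ∑ i ∈ F, d i * ht i :=
          sum_congr rfl fun i hi => by rw [ht_one i (hFA hi), mul_one]
      _ = ht (∑ i ∈ F, d i • i) := by simp
      _ = 0 := by rw [hd0, map_zero]
  obtain ⟨t, -, i, hi, hyi⟩ := exists_sub_smul_mem_hull_erase hyF
    (exists_pos_of_sum_zero_of_exists_nonzero d hdsum hdne)
  rw [hd0, smul_zero, sub_zero] at hyi
  exact (card_erase_lt_of_mem hi).not_ge (hmin _ (mem_filter.mpr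
    ⟨mem_powerset.mpr ((erase_subset i F).trans hFA), hyi⟩))

/- The exchange step of the simplex algorithm for minimising the value at `y` of the functional
that interpolates `w` on `F`; genericity of `y` excludes degenerate pivots. -/
lemma exists_exchange (ht_one : ∀ a ∈ A, ht a = 1) (hy : IsGenericPoint A y) (hFA : F ⊆ A)
    (hF : LinearIndepOn ℝ id (F : Set E)) (hyF : y ∈ hull ℝ (F : Set E)) {j : E} (hj : j ∈ A) :
    ∃ G ⊆ A, LinearIndepOn ℝ id (G : Set E) ∧ y ∈ hull ℝ (G : Set E) ∧
      ∀ (w : E → ℝ) (ℓ ℓ' : Dual ℝ E), (∀ i ∈ F, ℓ i = w i) → (∀ i ∈ G, ℓ' i = w i) →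
        w j < ℓ j → ℓ' y < ℓ y := by
  classical
  obtain ⟨d, -, hd⟩ := mem_span_finset.mp (hy F hFA (hull_le_span ℝ _ hyF) hj)
  have hdpos : ∃ i ∈ F, 0 < d i := by
    refine exists_lt_of_sum_lt (f := 0) ?_
    calc ∑ i ∈ F, (0 : E → ℝ) i < ht j := by simp [ht_one j hj]
      _ = ∑ i ∈ F, d i * ht i := by simp [← hd]
      _ = ∑ i ∈ F, d i := sum_congr rfl fun i hi => by rw [ht_one i (hFA hi), mul_one]
  obtain ⟨t, ht_nonneg, i, hi, hyi⟩ := exists_sub_smul_mem_hull_erase hyF hdpos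
  rw [hd] at hyi
  have hyspan : y ∉ span ℝ (↑(F.erase i) : Set E) := fun h =>
    (erase_ssubset hi).ne (hy.eq_of_subset hFA hF (erase_subset i F) h)
  have hspan := hull_le_span ℝ _ hyi
  have htpos : 0 < t := ht_nonneg.lt_of_ne' fun h0 => hyspan (by simpa [h0] using hspan)
  have hjspan : j ∉ span ℝ (↑(F.erase i) : Set E) := fun h =>
    hyspan ((Submodule.sub_mem_iff_left _ (Submodule.smul_mem _ t h)).mp hspan)
  refine ⟨insert j (F.erase i), insert_subset hj ((erase_subset i F).trans hFA), ?_, ?_, ?_⟩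
  · rw [coe_insert]
    exact (hF.mono (mod_cast erase_subset i F)).id_insert hjspan
  · have hmono := span_mono (R := {r : ℝ // 0 ≤ r})
      (Finset.coe_subset.mpr (subset_insert j (F.erase i))) hyi
    have hjhull : j ∈ hull ℝ (↑(insert j (F.erase i)) : Set E) :=
      PointedCone.subset_hull (mem_insert_self _ _)
    simpa using add_mem hmono (PointedCone.smul_mem _ ht_nonneg hjhull)
  · intro w ℓ ℓ' hℓ hℓ' hlt
    have hagree : ℓ (y - t • j) = ℓ' (y - t • j) := by
      refine LinearMap.eqOn_span (fun k hk => ?_) hspan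
      rw [hℓ k (mem_of_mem_erase hk), hℓ' k (mem_insert_of_mem hk)]
    simp only [map_sub, map_smul, smul_eq_mul, hℓ' j (mem_insert_self _ _)] at hagree
    linarith [mul_lt_mul_of_pos_left hlt htpos]

end ConicCombinations

section RegularTriangulation

open Classical in
/-- The maximal cells of the regular subdivision of the cone over `A` induced by the height
function `w`, each given by its set of generators: these are the spanning subsets of `A` on which
some linear functional bounded by `w` attains `w`. For generic `w` they form a triangulation. -/
noncomputable def regularTriangulation (A : Finset E) (w : E → ℝ) : Finset (Finset E) :=
  {F ∈ A.powerset | (A : Set E) ⊆ span ℝ (F : Set E) ∧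
    ∃ ℓ : Dual ℝ E, ∀ a ∈ A, ℓ a ≤ w a ∧ (ℓ a = w a ↔ a ∈ F)}

variable {A F G : Finset E} {w : E → ℝ} {v y : E}

lemma mem_regularTriangulation : F ∈ regularTriangulation A w ↔ F ⊆ A ∧
    (A : Set E) ⊆ span ℝ (F : Set E) ∧
      ∃ ℓ : Dual ℝ E, ∀ a ∈ A, ℓ a ≤ w a ∧ (ℓ a = w a ↔ a ∈ F) := by
  simp only [regularTriangulation, mem_filter, mem_powerset]

lemma linearIndepOn_of_mem_regularTriangulation (hw : IsGenericHeight A w)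
    (hF : F ∈ regularTriangulation A w) : LinearIndepOn ℝ id (F : Set E) := by
  obtain ⟨hFA, -, ℓ, hℓ⟩ := mem_regularTriangulation.mp hF
  exact (hw ℓ).mono fun a ha => ⟨hFA ha, (hℓ a (hFA ha)).2.mpr ha⟩

lemma span_eq_of_mem_regularTriangulation (hF : F ∈ regularTriangulation A w) :
    span ℝ (F : Set E) = span ℝ (A : Set E) := by
  obtain ⟨hFA, hAF, -⟩ := mem_regularTriangulation.mp hF
  exact le_antisymm (span_mono (mod_cast hFA)) (Submodule.span_le.mpr hAF)

lemma subset_of_mem_hull_of_mem_regularTriangulation (hw : IsGenericHeight A w)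
    (hF : F ∈ regularTriangulation A w) (hG : G ∈ regularTriangulation A w)
    (hy : IsGenericPoint A y) (hyF : y ∈ hull ℝ (F : Set E)) (hyG : y ∈ hull ℝ (G : Set E)) :
    F ⊆ G := by
  have hLI := linearIndepOn_of_mem_regularTriangulation hw hF
  obtain ⟨hFA, -, ℓF, hℓF⟩ := mem_regularTriangulation.mp hF
  obtain ⟨hGA, -, ℓG, hℓG⟩ := mem_regularTriangulation.mp hG
  have hnonneg : ∀ i ∈ F, 0 ≤ (ℓF - ℓG) i := fun i hi => by
    have hi' := (hℓF i (hFA hi)).2.mpr hi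
    simpa [hi'] using (hℓG i (hFA hi)).1
  have hle : 0 ≤ (ℓG - ℓF) y := apply_nonneg_of_mem_hull (fun i hi => by
    have hi' := (hℓG i (hGA hi)).2.mpr hi
    simpa [hi'] using (hℓF i (hGA hi)).1) hyG
  have hyface := mem_hull_filter_of_apply_nonpos hnonneg hyF (by simpa using hle)
  have hface := hy.eq_of_subset hFA hLI (filter_subset _ _) (hull_le_span ℝ _ hyface)
  intro i hi
  rw [← hface] at hi
  obtain ⟨hiF, hzero⟩ := mem_filter.mp hi
  rw [← (hℓG i (hFA hiF)).2, ← (hℓF i (hFA hiF)).2.mpr hiF]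
  exact (sub_eq_zero.mp hzero).symm

lemma exists_mem_regularTriangulation {ht : Dual ℝ E} (ht_one : ∀ a ∈ A, ht a = 1)
    (hw : IsGenericHeight A w) (hy : IsGenericPoint A y) (hyA : y ∈ hull ℝ (A : Set E)) :
    ∃ F ∈ regularTriangulation A w, y ∈ hull ℝ (F : Set E) := by
  classical
  choose! ℓ hℓ using fun (F : Finset E) (hF : LinearIndepOn ℝ id (F : Set E)) =>
    exists_dual_apply_eq hF w
  let bases := A.powerset.filter fun F : Finset E =>
    LinearIndepOn ℝ id (F : Set E) ∧ y ∈ hull ℝ (F : Set E)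
  have hbases {F : Finset E} :
      F ∈ bases ↔ F ⊆ A ∧ LinearIndepOn ℝ id (F : Set E) ∧ y ∈ hull ℝ (F : Set E) := by
    simp [bases]
  obtain ⟨F, hF, hmin⟩ := exists_min_image bases (fun F => ℓ F y)
    ((exists_linearIndepOn_mem_hull ht_one hyA).imp fun _ h => hbases.mpr h)
  obtain ⟨hFA, hLI, hyF⟩ := hbases.mp hF
  have hAF := hy F hFA (hull_le_span ℝ _ hyF)
  have hle : ∀ a ∈ A, ℓ F a ≤ w a := by
    intro a ha
    by_contra! hlt
    obtain ⟨G, hGA, hGLI, hyG, hG⟩ := exists_exchange ht_one hy hFA hLI hyF ha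
    exact (hG w _ _ (hℓ F hLI) (hℓ G hGLI) hlt).not_ge (hmin G (hbases.mpr ⟨hGA, hGLI, hyG⟩))
  refine ⟨F, mem_regularTriangulation.mpr ⟨hFA, hAF, ℓ F, fun a ha =>
    ⟨hle a ha, fun haw => ?_, hℓ F hLI a⟩⟩, hyF⟩
  exact mem_of_mem_span_of_subset (hw (ℓ F)) (fun i hi => ⟨hFA hi, hℓ F hLI i hi⟩)
    ⟨ha, haw⟩ (hAF ha)

lemma mem_regularTriangulation_insert [DecidableEq E] (hv : v ∈ span ℝ (A : Set E)) (hvA : v ∉ A)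
    (hwv : ∀ F ⊆ A, v ∈ span ℝ (F : Set E) →
      ∀ ℓ : Dual ℝ E, (∀ i ∈ F, ℓ i = w i) → ℓ v < w v)
    (hF : F ∈ regularTriangulation A w) : F ∈ regularTriangulation (insert v A) w := by
  have hspan := span_eq_of_mem_regularTriangulation hF
  obtain ⟨hFA, hAF, ℓ, hℓ⟩ := mem_regularTriangulation.mp hF
  have hvF : v ∈ span ℝ (F : Set E) := hspan ▸ hv
  have hlt := hwv F hFA hvF ℓ fun i hi => (hℓ i (hFA hi)).2.mpr hi
  refine mem_regularTriangulation.mpr ⟨hFA.trans (subset_insert v A), ?_, ℓ,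
    forall_mem_insert _ _ _ |>.mpr ⟨⟨hlt.le, ?_⟩, hℓ⟩⟩
  · rw [coe_insert]
    exact Set.insert_subset hvF hAF
  · exact iff_of_false hlt.ne fun h => hvA (hFA h)

lemma insert_mem_regularTriangulation_insert [DecidableEq E] (hv : v ∉ span ℝ (A : Set E))
    (hF : F ∈ regularTriangulation A w) :
    insert v F ∈ regularTriangulation (insert v A) w := by
  obtain ⟨hFA, hAF, ℓ, hℓ⟩ := mem_regularTriangulation.mp hF
  obtain ⟨f, hfv, hfA⟩ := exists_apply_eq_one_of_notMem hv
  refine mem_regularTriangulation.mpr ⟨insert_subset_insert v hFA, ?_,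
    ℓ + (w v - ℓ v) • f, forall_mem_insert _ _ _ |>.mpr ⟨by simp [hfv], fun a ha => ?_⟩⟩
  · rw [coe_insert, coe_insert]
    exact Set.insert_subset (subset_span (Set.mem_insert v _))
      (hAF.trans (span_mono (Set.subset_insert v _)))
  · have hav : a ≠ v := fun h => hv (h ▸ subset_span ha)
    simpa [hfA a (subset_span ha), hav] using hℓ a ha

end RegularTriangulation

section HalfOpenCone

/-- The half-open cone spanned by `F` in direction `z`: the points which an infinitesimal
translation by `z` moves into the cone over `F`. For generic `z`, the half-open cones over the
cells of a subdivision are disjoint. -/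
def halfOpenCone (F : Finset E) (z : E) : Set E :=
  {x | ∀ᶠ ε : ℝ in 𝓝[>] 0, x + ε • z ∈ hull ℝ (F : Set E)}

variable {A F : Finset E} {w : E → ℝ} {v x z : E}

lemma mem_halfOpenCone :
    x ∈ halfOpenCone F z ↔ ∀ᶠ ε : ℝ in 𝓝[>] 0, x + ε • z ∈ hull ℝ (F : Set E) :=
  Iff.rfl

lemma add_mem_halfOpenCone (hx : x ∈ halfOpenCone F z) (hv : v ∈ F) : x + v ∈ halfOpenCone F z :=
  (mem_halfOpenCone.mp hx).mono fun ε hε => by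
    simpa only [add_right_comm] using add_mem hε (PointedCone.subset_hull hv)

lemma sub_mem_halfOpenCone (hF : LinearIndepOn ℝ id (F : Set E)) {i j : E} (hi : i ∈ F)
    (hj : j ∈ F) (hij : i ≠ j) (hx : x ∈ halfOpenCone F z)
    (hxij : x + i - j ∈ halfOpenCone F z) : x - j ∈ halfOpenCone F z := by
  classical
  obtain ⟨c, hc, hmem⟩ := exists_coordinates hF
  rw [mem_halfOpenCone] at hx hxij ⊢
  filter_upwards [hx, hxij] with ε hε hεij
  obtain ⟨hspan, hpos⟩ := (hmem _).mp hε
  obtain ⟨-, hposij⟩ := (hmem _).mp hεij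
  have hsub : x - j + ε • z = x + ε • z - j := by abel
  refine (hmem _).mpr ⟨hsub ▸ Submodule.sub_mem _ hspan (subset_span hj), fun k hk => ?_⟩
  rcases eq_or_ne k j with rfl | hkj
  · simpa [hc k hk i hi, hij.symm] using hposij k hk
  · simpa [hc k hk j hj, hkj] using hpos k hk

lemma halfOpenCone_subset_hull (hF : LinearIndepOn ℝ id (F : Set E))
    (hz : z ∈ span ℝ (F : Set E)) : halfOpenCone F z ⊆ hull ℝ (F : Set E) := by
  classical
  intro x hx
  rw [mem_halfOpenCone] at hx
  obtain ⟨c, -, hmem⟩ := exists_coordinates hF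
  obtain ⟨ε, hε⟩ := hx.exists
  refine (hmem x).mpr ⟨?_, fun i hi => ?_⟩
  · exact (Submodule.add_mem_iff_left _ (Submodule.smul_mem _ ε hz)).mp ((hmem _).mp hε).1
  · refine nonneg_of_eventually_add_mul_nonneg (b := c i z) (hx.mono fun ε hε => ?_)
    simpa using ((hmem _).mp hε).2 i hi

lemma existsUnique_mem_halfOpenCone {ht : Dual ℝ E} (ht_one : ∀ a ∈ A, ht a = 1)
    (hw : IsGenericHeight A w) (hz : IsGenericPoint A z) (hzA : z ∈ hull ℝ (A : Set E))
    (hx : x ∈ hull ℝ (A : Set E)) :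
    ∃! F, F ∈ regularTriangulation A w ∧ x ∈ halfOpenCone F z := by
  have hgen := hz.eventually_add_smul x
  have hmem : ∀ᶠ ε : ℝ in 𝓝[>] 0, x + ε • z ∈ hull ℝ (A : Set E) :=
    eventually_mem_nhdsWithin.mono fun ε hε =>
      add_mem hx (PointedCone.smul_mem _ (le_of_lt hε) hzA)
  have hcover : ∀ᶠ ε : ℝ in 𝓝[>] 0,
      ∃ F ∈ regularTriangulation A w, x + ε • z ∈ hull ℝ (F : Set E) := by
    filter_upwards [hgen, hmem] with ε hε hεA
    exact exists_mem_regularTriangulation ht_one hw hε hεA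
  obtain ⟨F, hF, hxF⟩ := (frequently_exists_finset _).mp hcover.frequently
  refine ⟨F, ⟨hF, eventually_add_smul_mem_of_frequently (PointedCone.convex _) hxF⟩, ?_⟩
  rintro G ⟨hG, hxG⟩
  rw [mem_halfOpenCone] at hxG
  obtain ⟨ε, hεF, hεG, hε⟩ := (hxF.and_eventually (hxG.and hgen)).exists
  exact (subset_of_mem_hull_of_mem_regularTriangulation hw hG hF hε hεG hεF).antisymm
    (subset_of_mem_hull_of_mem_regularTriangulation hw hF hG hε hεF hεG)

lemma mem_halfOpenCone_insert [DecidableEq E] (hx : x ∈ halfOpenCone F z) :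
    x ∈ halfOpenCone (insert v F) (z + v) := by
  rw [mem_halfOpenCone] at hx ⊢
  filter_upwards [hx, self_mem_nhdsWithin] with ε hε hpos
  have hmono := span_mono (R := {r : ℝ // 0 ≤ r}) (Finset.coe_subset.mpr (subset_insert v F)) hε
  have hv : v ∈ hull ℝ (↑(insert v F) : Set E) :=
    PointedCone.subset_hull (mem_insert_self v F)
  simpa only [smul_add, add_assoc] using
    add_mem hmono (PointedCone.smul_mem _ (le_of_lt hpos) hv)

lemma mem_halfOpenCone_of_add_smul_mem_insert [DecidableEq E] {W : Submodule ℝ E}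
    (hFW : (F : Set E) ⊆ W) (hv : v ∉ W) (hzW : z ∈ W) (hx : x ∈ W) {t : ℝ}
    (h : x + t • v ∈ halfOpenCone (insert v F) (z + v)) : 0 ≤ t ∧ x ∈ halfOpenCone F z := by
  have hsplit : ∀ᶠ ε : ℝ in 𝓝[>] 0, 0 ≤ t + ε ∧ x + ε • z ∈ hull ℝ (F : Set E) := by
    refine (mem_halfOpenCone.mp h).mono fun ε hε => ?_
    refine mem_hull_of_add_smul_mem_hull_insert hFW hv
      (W.add_mem hx (W.smul_mem ε hzW)) ?_
    have hregroup : x + ε • z + (t + ε) • v = x + t • v + ε • (z + v) := by module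
    rw [coe_insert] at hε
    rwa [hregroup]
  refine ⟨nonneg_of_eventually_add_mul_nonneg (b := 1) ?_, hsplit.mono fun _ => And.right⟩
  simpa only [mul_one] using hsplit.mono fun _ => And.left

end HalfOpenCone

section HilbertSeries

variable {ht : Dual ℝ E} {S U : Set E} {v : E}

/-- The points of `S` at height `k` with respect to the grading `ht`. -/
def level (ht : Dual ℝ E) (S : Set E) (k : ℕ) : Set E :=
  {x ∈ S | ht x = k}

/-- The generating function counting the points of `S` by height. It is meaningful when the levels
of `S` are finite: an infinite level is counted as empty. -/
noncomputable def hilbertSeries (ht : Dual ℝ E) (S : Set E) : PowerSeries ℤ :=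
  PowerSeries.mk fun k => ((level ht S k).ncard : ℤ)

lemma level_mono (hSU : S ⊆ U) (k : ℕ) : level ht S k ⊆ level ht U k :=
  fun _ hx => ⟨hSU hx.1, hx.2⟩

lemma coeff_hilbertSeries_nonneg (k : ℕ) : 0 ≤ (hilbertSeries ht S).coeff k := by
  simp [hilbertSeries]

lemma coeff_hilbertSeries_mono (hSU : S ⊆ U) (hfin : ∀ k, (level ht U k).Finite) (k : ℕ) :
    (hilbertSeries ht S).coeff k ≤ (hilbertSeries ht U).coeff k := by
  simpa [hilbertSeries] using Set.ncard_le_ncard (level_mono hSU k) (hfin k)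

lemma hilbertSeries_eq_sum {κ : Type*} {T : Finset κ} {piece : κ → Set E}
    (hfin : ∀ k, (level ht S k).Finite) (hsub : ∀ i ∈ T, piece i ⊆ S)
    (hunique : ∀ x ∈ S, ∃! i, i ∈ T ∧ x ∈ piece i) :
    hilbertSeries ht S = ∑ i ∈ T, hilbertSeries ht (piece i) := by
  ext k
  have hcover : level ht S k = ⋃ i ∈ (T : Set κ), level ht (piece i) k := by
    ext x
    simp only [Set.mem_iUnion, exists_prop]
    constructor
    · rintro ⟨hxS, hxk⟩
      obtain ⟨i, ⟨hi, hxi⟩, -⟩ := hunique x hxS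
      exact ⟨i, hi, hxi, hxk⟩
    · rintro ⟨i, hi, hx⟩
      exact level_mono (hsub i hi) k hx
  have hdisj : (T : Set κ).PairwiseDisjoint fun i => level ht (piece i) k := by
    intro i hi j hj hij
    refine Set.disjoint_left.mpr fun x hxi hxj => hij ?_
    exact (hunique x (hsub i hi hxi.1)).unique ⟨hi, hxi.1⟩ ⟨hj, hxj.1⟩
  have hcard := T.finite_toSet.ncard_biUnion
    (fun i hi => (hfin k).subset (level_mono (hsub i hi) k)) hdisj
  rw [← hcover, finsum_mem_coe_finset] at hcard
  simp [hilbertSeries, hcard]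

lemma one_sub_X_mul_hilbertSeries (hv : ht v = 1) (hnonneg : ∀ x ∈ S, 0 ≤ ht x)
    (hfin : ∀ k, (level ht S k).Finite) (hadd : ∀ x ∈ S, x + v ∈ S) :
    (1 - PowerSeries.X) * hilbertSeries ht S = hilbertSeries ht {x ∈ S | x - v ∉ S} := by
  ext k
  rw [sub_mul, one_mul, map_sub]
  cases k with
  | zero =>
    have hzero : level ht {x ∈ S | x - v ∉ S} 0 = level ht S 0 := by
      refine (level_mono (Set.sep_subset _ _) 0).antisymm fun x hx => ⟨⟨hx.1, fun hxv => ?_⟩, hx.2⟩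
      have hneg := hnonneg _ hxv
      rw [map_sub, hv, hx.2] at hneg
      norm_num at hneg
    simp [hilbertSeries, hzero]
  | succ k =>
    have hsplit : level ht S (k + 1) =
        level ht {x ∈ S | x - v ∉ S} (k + 1) ∪ (· + v) '' level ht S k := by
      ext x
      constructor
      · rintro ⟨hxS, hxk⟩
        by_cases hxv : x - v ∈ S
        · exact .inr ⟨x - v, ⟨hxv, by simp [hxk, hv]⟩, by simp⟩
        · exact .inl ⟨⟨hxS, hxv⟩, hxk⟩
      · rintro (hx | ⟨y, ⟨hyS, hyk⟩, rfl⟩)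
        · exact level_mono (Set.sep_subset _ _) _ hx
        · exact ⟨hadd y hyS, by simp [hyk, hv]⟩
    have hdisj : Disjoint (level ht {x ∈ S | x - v ∉ S} (k + 1)) ((· + v) '' level ht S k) := by
      refine Set.disjoint_left.mpr ?_
      rintro _ ⟨⟨-, hyv⟩, -⟩ ⟨y, ⟨hyS, -⟩, rfl⟩
      exact hyv (by simpa using hyS)
    have hcard := Set.ncard_union_eq hdisj
      ((hfin _).subset (level_mono (Set.sep_subset _ _) _)) ((hfin k).image _)
    rw [← hsplit, Set.ncard_image_of_injective _ (add_left_injective v)] at hcard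
    simp [hilbertSeries, hcard, PowerSeries.coeff_succ_X_mul]

lemma one_sub_X_pow_card_mul_hilbertSeries {G : Finset E} (hG : ∀ v ∈ G, ht v = 1)
    (hnonneg : ∀ x ∈ S, 0 ≤ ht x) (hfin : ∀ k, (level ht S k).Finite)
    (hadd : ∀ x ∈ S, ∀ v ∈ G, x + v ∈ S)
    (hfree : ∀ x ∈ S, ∀ i ∈ G, ∀ j ∈ G, i ≠ j → x + i - j ∈ S → x - j ∈ S) :
    (1 - PowerSeries.X) ^ #G * hilbertSeries ht S =
      hilbertSeries ht {x ∈ S | ∀ v ∈ G, x - v ∉ S} := by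
  classical
  induction G using Finset.induction_on with
  | empty => simp
  | insert v G hvG ih =>
    simp only [forall_mem_insert] at hG hadd hfree
    have hbox := ih hG.2 (fun x hx => (hadd x hx).2) fun x hx i hi j hj =>
      ((hfree x hx).2 i hi).2 j hj
    have hsub : {x ∈ S | ∀ j ∈ G, x - j ∉ S} ⊆ S := Set.sep_subset _ _
    have hstep := one_sub_X_mul_hilbertSeries (S := {x ∈ S | ∀ j ∈ G, x - j ∉ S}) hG.1
      (fun x hx => hnonneg x hx.1) (fun k => (hfin k).subset (level_mono hsub k)) fun x hx =>
        ⟨(hadd x hx.1).1, fun j hj hxj => hx.2 j hj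
          ((hfree x hx.1).1.2 j hj (ne_of_mem_of_not_mem hj hvG).symm hxj)⟩
    rw [card_insert_of_notMem hvG, pow_succ', mul_assoc, hbox, hstep]
    congr 1
    ext x
    constructor
    · rintro ⟨⟨hxS, hxG⟩, hxv⟩
      refine ⟨hxS, forall_mem_insert _ _ _ |>.mpr ⟨fun hxvS => hxv ⟨hxvS, ?_⟩, hxG⟩⟩
      intro j hj hxvj
      have hcancel : x - v - j + v = x - j := by abel
      exact hxG j hj (hcancel ▸ (hadd _ hxvj).1)
    · rintro ⟨hxS, hx⟩
      obtain ⟨hxv, hxG⟩ := forall_mem_insert _ _ _ |>.mp hx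
      exact ⟨⟨hxS, hxG⟩, fun h => hxv h.1⟩

end HilbertSeries

section Boxes

variable {ht : Dual ℝ E} {L : AddSubgroup E} {A F : Finset E} {w : E → ℝ} {v z : E}

/-- The points of `L` in the fundamental parallelepiped of the half-open cone over `F` in
direction `z`: those which leave the half-open cone when any generator is subtracted. -/
def halfOpenBox (L : AddSubgroup E) (F : Finset E) (z : E) : Set E :=
  {x | x ∈ L ∧ x ∈ halfOpenCone F z ∧ ∀ i ∈ F, x - i ∉ halfOpenCone F z}

/-- The numerator of the generating function of the points of `L` in the cone over `A`. When `A`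
is the set of vertices of a polytope placed at height one, it is the `h*`-polynomial. -/
noncomputable def hStarSeries (ht : Dual ℝ E) (L : AddSubgroup E) (A : Finset E) : PowerSeries ℤ :=
  (1 - PowerSeries.X) ^ finrank ℝ (span ℝ (A : Set E)) *
    hilbertSeries ht (L ∩ hull ℝ (A : Set E))

lemma one_sub_X_pow_card_mul_hilbertSeries_halfOpenCone (ht_one : ∀ i ∈ F, ht i = 1)
    (hFL : (F : Set E) ⊆ L) (hF : LinearIndepOn ℝ id (F : Set E))
    (hz : z ∈ span ℝ (F : Set E)) (hfin : ∀ k, (level ht (L ∩ halfOpenCone F z) k).Finite) :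
    (1 - PowerSeries.X) ^ #F * hilbertSeries ht (L ∩ halfOpenCone F z) =
      hilbertSeries ht (halfOpenBox L F z) := by
  rw [one_sub_X_pow_card_mul_hilbertSeries ht_one _ hfin
    (fun x hx i hi => ⟨L.add_mem hx.1 (hFL hi), add_mem_halfOpenCone hx.2 hi⟩)
    (fun x hx i hi j hj hij hxij =>
      ⟨L.sub_mem hx.1 (hFL hj), sub_mem_halfOpenCone hF hi hj hij hx.2 hxij.2⟩)]
  · congr 1
    ext x
    constructor
    · rintro ⟨⟨hxL, hx⟩, hbox⟩
      exact ⟨hxL, hx, fun i hi hxi => hbox i hi ⟨L.sub_mem hxL (hFL hi), hxi⟩⟩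
    · rintro ⟨hxL, hx, hbox⟩
      exact ⟨⟨hxL, hx⟩, fun i hi hxi => hbox i hi hxi.2⟩
  · intro x hx
    exact apply_nonneg_of_mem_hull (fun i hi => (ht_one i hi).symm ▸ zero_le_one)
      (halfOpenCone_subset_hull hF hz hx.2)

lemma halfOpenCone_subset_hull_of_mem_regularTriangulation (hw : IsGenericHeight A w)
    (hzA : z ∈ span ℝ (A : Set E)) (hF : F ∈ regularTriangulation A w) :
    halfOpenCone F z ⊆ hull ℝ (A : Set E) :=
  (halfOpenCone_subset_hull (linearIndepOn_of_mem_regularTriangulation hw hF)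
    (span_eq_of_mem_regularTriangulation hF ▸ hzA)).trans
      (span_mono (mod_cast (mem_regularTriangulation.mp hF).1))

lemma hStarSeries_eq_sum (ht_one : ∀ a ∈ A, ht a = 1) (hAL : (A : Set E) ⊆ L)
    (hfin : ∀ k, (level ht (L ∩ hull ℝ (A : Set E)) k).Finite) (hw : IsGenericHeight A w)
    (hz : IsGenericPoint A z) (hzA : z ∈ hull ℝ (A : Set E)) :
    hStarSeries ht L A =
      ∑ F ∈ regularTriangulation A w, hilbertSeries ht (halfOpenBox L F z) := by
  have hzspan : z ∈ span ℝ (A : Set E) := hull_le_span ℝ _ hzA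
  have hsub : ∀ F ∈ regularTriangulation A w,
      ↑L ∩ halfOpenCone F z ⊆ ↑L ∩ (hull ℝ (A : Set E) : Set E) := fun F hF =>
    Set.inter_subset_inter_right _
      (halfOpenCone_subset_hull_of_mem_regularTriangulation hw hzspan hF)
  have hunique : ∀ x ∈ ↑L ∩ (hull ℝ (A : Set E) : Set E),
      ∃! F, F ∈ regularTriangulation A w ∧ x ∈ ↑L ∩ halfOpenCone F z := by
    rintro x ⟨hxL, hxA⟩
    simpa [show x ∈ L from hxL] using existsUnique_mem_halfOpenCone ht_one hw hz hzA hxA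
  rw [hStarSeries, hilbertSeries_eq_sum hfin hsub hunique, mul_sum]
  refine sum_congr rfl fun F hF => ?_
  have hLI := linearIndepOn_of_mem_regularTriangulation hw hF
  have hspan := span_eq_of_mem_regularTriangulation hF
  have hFA := (mem_regularTriangulation.mp hF).1
  rw [← hspan, finrank_span_finset_eq_card hLI]
  exact one_sub_X_pow_card_mul_hilbertSeries_halfOpenCone (fun i hi => ht_one i (hFA hi))
    (fun i hi => hAL (hFA hi)) hLI (hspan ▸ hzspan)
    fun k => (hfin k).subset (level_mono (hsub F hF) k)

lemma halfOpenBox_subset_insert [DecidableEq E] {W : Submodule ℝ E}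
    (hFW : (F : Set E) ⊆ W) (hv : v ∉ W) (hz : z ∈ W) :
    halfOpenBox L F z ⊆ halfOpenBox L (insert v F) (z + v) := by
  rintro x ⟨hxL, hx, hbox⟩
  have hxW : x ∈ W := by
    obtain ⟨ε, hε⟩ := (mem_halfOpenCone.mp hx).exists
    exact (Submodule.add_mem_iff_left _ (W.smul_mem ε hz)).mp
      (Submodule.span_le.mpr hFW (hull_le_span ℝ _ hε))
  refine ⟨hxL, mem_halfOpenCone_insert hx,
    forall_mem_insert _ _ _ |>.mpr ⟨fun hxv => ?_, fun i hi hxi => hbox i hi ?_⟩⟩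
  · have hneg : (0 : ℝ) ≤ -1 := (mem_halfOpenCone_of_add_smul_mem_insert hFW hv hz hxW
      (by simpa [sub_eq_add_neg] using hxv)).1
    norm_num at hneg
  · exact (mem_halfOpenCone_of_add_smul_mem_insert hFW hv hz (W.sub_mem hxW (hFW hi)) (t := 0)
      (by simpa using hxi)).2

end Boxes

section Monotonicity

variable {ht : Dual ℝ E} {L : AddSubgroup E} {A B : Finset E} {v : E}

lemma coeff_hStarSeries_le_insert_of_mem_span [DecidableEq E]
    (ht_one : ∀ a ∈ insert v A, ht a = 1) (hL : (↑(insert v A) : Set E) ⊆ L)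
    (hfin : ∀ k, (level ht (L ∩ hull ℝ (↑(insert v A) : Set E)) k).Finite) (hvA : v ∉ A)
    (hv : v ∈ span ℝ (A : Set E)) (k : ℕ) :
    (hStarSeries ht L A).coeff k ≤ (hStarSeries ht L (insert v A)).coeff k := by
  have hsub := subset_insert v A
  have hhull : hull ℝ (A : Set E) ≤ hull ℝ (↑(insert v A) : Set E) := span_mono (mod_cast hsub)
  obtain ⟨w, hw, hlift⟩ := exists_isGenericHeight_insert hvA
  obtain ⟨z, hzA, hz⟩ : ∃ z ∈ hull ℝ (A : Set E), IsGenericPoint (insert v A) z :=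
    exists_isGenericPoint (by rw [coe_insert]; exact Set.insert_subset hv subset_span)
  rw [hStarSeries_eq_sum (fun a ha => ht_one a (hsub ha)) (fun a ha => hL (hsub ha))
      (fun k => (hfin k).subset (level_mono (Set.inter_subset_inter_right _ hhull) k))
      (hw.mono hsub) (hz.mono hsub) hzA,
    hStarSeries_eq_sum ht_one hL hfin hw hz (hhull hzA), map_sum, map_sum]
  exact sum_le_sum_of_subset_of_nonneg
    (fun F hF => mem_regularTriangulation_insert hv hvA hlift hF)
    fun F _ _ => coeff_hilbertSeries_nonneg k

lemma coeff_hStarSeries_le_insert_of_notMem_span [DecidableEq E]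
    (ht_one : ∀ a ∈ insert v A, ht a = 1) (hL : (↑(insert v A) : Set E) ⊆ L)
    (hfin : ∀ k, (level ht (L ∩ hull ℝ (↑(insert v A) : Set E)) k).Finite)
    (hv : v ∉ span ℝ (A : Set E)) (k : ℕ) :
    (hStarSeries ht L A).coeff k ≤ (hStarSeries ht L (insert v A)).coeff k := by
  have hsub := subset_insert v A
  have hhull : hull ℝ (A : Set E) ≤ hull ℝ (↑(insert v A) : Set E) := span_mono (mod_cast hsub)
  obtain ⟨w, hw, -⟩ := exists_isGenericHeight_insert fun hvA => hv (subset_span hvA)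
  obtain ⟨z, hzA, hz⟩ := exists_isGenericPoint (subset_span (R := ℝ) (s := (A : Set E)))
  have hzspan := hull_le_span ℝ _ hzA
  have hzv : z + v ∈ hull ℝ (↑(insert v A) : Set E) :=
    add_mem (hhull hzA) (PointedCone.subset_hull (mem_insert_self v A))
  rw [hStarSeries_eq_sum (fun a ha => ht_one a (hsub ha)) (fun a ha => hL (hsub ha))
      (fun k => (hfin k).subset (level_mono (Set.inter_subset_inter_right _ hhull) k))
      (hw.mono hsub) hz hzA,
    hStarSeries_eq_sum ht_one hL hfin hw (hz.add_insert hzspan hv) hzv, map_sum, map_sum]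
  have hinj : Set.InjOn (insert v) (regularTriangulation A w : Set (Finset E)) :=
    Set.LeftInvOn.injOn (f₁' := fun F => F.erase v) fun F hF => erase_insert fun hvF =>
      hv (subset_span ((mem_regularTriangulation.mp hF).1 hvF))
  have hcell {F : Finset E} (hF : F ∈ regularTriangulation A w) :=
    insert_mem_regularTriangulation_insert hv hF
  have hbox {F : Finset E} (hF : F ∈ regularTriangulation A w) :
      halfOpenBox L F z ⊆ halfOpenBox L (insert v F) (z + v) :=
    halfOpenBox_subset_insert
      (subset_span.trans_eq (congrArg _ (span_eq_of_mem_regularTriangulation hF))) hv hzspan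
  have hbox_hull {F : Finset E} (hF : F ∈ regularTriangulation A w) :
      halfOpenBox L (insert v F) (z + v) ⊆ L ∩ (hull ℝ (↑(insert v A) : Set E) : Set E) :=
    fun x hx => ⟨hx.1, halfOpenCone_subset_hull_of_mem_regularTriangulation hw
      (hull_le_span ℝ _ hzv) (hcell hF) hx.2.1⟩
  calc ∑ F ∈ regularTriangulation A w, (hilbertSeries ht (halfOpenBox L F z)).coeff k
      ≤ ∑ F ∈ regularTriangulation A w,
          (hilbertSeries ht (halfOpenBox L (insert v F) (z + v))).coeff k :=
        sum_le_sum fun F hF => coeff_hilbertSeries_mono (hbox hF)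
          (fun k => (hfin k).subset (level_mono (hbox_hull hF) k)) k
    _ = ∑ G ∈ (regularTriangulation A w).image (insert v),
          (hilbertSeries ht (halfOpenBox L G (z + v))).coeff k := by rw [sum_image hinj]
    _ ≤ ∑ G ∈ regularTriangulation (insert v A) w,
          (hilbertSeries ht (halfOpenBox L G (z + v))).coeff k :=
        sum_le_sum_of_subset_of_nonneg (image_subset_iff.mpr fun F hF => hcell hF)
          fun G _ _ => coeff_hilbertSeries_nonneg k

lemma coeff_hStarSeries_mono (ht_one : ∀ a ∈ B, ht a = 1) (hBL : (B : Set E) ⊆ L)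
    (hfin : ∀ k, (level ht (L ∩ hull ℝ (B : Set E)) k).Finite) (hAB : A ⊆ B) (k : ℕ) :
    (hStarSeries ht L A).coeff k ≤ (hStarSeries ht L B).coeff k := by
  classical
  induction B using Finset.strongInduction with
  | H B ih =>
    obtain rfl | hne := hAB.eq_or_ssubset
    · rfl
    obtain ⟨v, hvB, hvA⟩ := exists_of_ssubset hne
    have hsub := erase_subset v B
    have hhull : hull ℝ (↑(B.erase v) : Set E) ≤ hull ℝ (B : Set E) := span_mono (mod_cast hsub)
    refine (ih (B.erase v) (erase_ssubset hvB) (fun a ha => ht_one a (hsub ha))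
      (fun a ha => hBL (hsub ha))
      (fun k => (hfin k).subset (level_mono (Set.inter_subset_inter_right _ hhull) k))
      (subset_erase.mpr ⟨hAB, hvA⟩)).trans ?_
    rw [← insert_erase hvB] at ht_one hBL hfin
    nth_rw 2 [← insert_erase hvB]
    by_cases hv : v ∈ span ℝ (↑(B.erase v) : Set E)
    · exact coeff_hStarSeries_le_insert_of_mem_span ht_one hBL hfin (notMem_erase v B) hv k
    · exact coeff_hStarSeries_le_insert_of_notMem_span ht_one hBL hfin hv k

end Monotonicity

section Homogenization

variable {V : Type*} {S T : Finset V}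

/-- The configuration `S` placed at height one: its conic hull is the cone over the polytope with
vertices in `S`. -/
def homogenization (S : Finset V) : Finset (V × ℝ) :=
  S.map ⟨fun y => (y, 1), Prod.mk_left_injective 1⟩

lemma mem_homogenization {x : V × ℝ} : x ∈ homogenization S ↔ ∃ y ∈ S, (y, 1) = x :=
  mem_map

lemma homogenization_mono (hST : S ⊆ T) : homogenization S ⊆ homogenization T :=
  map_subset_map.mpr hST

variable [AddCommGroup V] [Module ℝ V]

lemma snd_eq_one_of_mem_homogenization : ∀ x ∈ homogenization S, LinearMap.snd ℝ V ℝ x = 1 := by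
  intro x hx
  obtain ⟨y, -, rfl⟩ := mem_homogenization.mp hx
  rfl

lemma mem_hull_homogenization_iff_exists {x : V} {t : ℝ} :
    (x, t) ∈ hull ℝ (homogenization S : Set (V × ℝ)) ↔
      ∃ c : V → ℝ, (∀ y ∈ S, 0 ≤ c y) ∧ ∑ y ∈ S, c y = t ∧ ∑ y ∈ S, c y • y = x := by
  rw [mem_hull_finset]
  constructor
  · rintro ⟨c, hc, hsum⟩
    refine ⟨fun y => c (y, 1), fun y hy => hc _ (mem_homogenization.mpr ⟨y, hy, rfl⟩), ?_, ?_⟩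
    · simpa [homogenization, Prod.snd_sum] using congrArg Prod.snd hsum
    · simpa [homogenization, Prod.fst_sum] using congrArg Prod.fst hsum
  · rintro ⟨c, hc, rfl, rfl⟩
    refine ⟨fun x => c x.1, fun x hx => ?_, ?_⟩
    · obtain ⟨y, hy, rfl⟩ := mem_homogenization.mp hx
      exact hc y hy
    · simp [homogenization, Prod.ext_iff, Prod.fst_sum, Prod.snd_sum]

lemma mem_hull_homogenization (hS : S.Nonempty) {x : V} {t : ℝ} (ht : 0 ≤ t) :
    (x, t) ∈ hull ℝ (homogenization S : Set (V × ℝ)) ↔ x ∈ t • convexHull ℝ (S : Set V) := by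
  rw [mem_hull_homogenization_iff_exists]
  obtain rfl | hpos := ht.eq_or_lt
  · have hzero : (∃ c : V → ℝ, (∀ y ∈ S, 0 ≤ c y) ∧ ∑ y ∈ S, c y = 0 ∧ ∑ y ∈ S, c y • y = x) ↔
        x = 0 := by
      constructor
      · rintro ⟨c, hc, hsum, rfl⟩
        exact sum_eq_zero fun y hy => by
          rw [(sum_eq_zero_iff_of_nonneg hc).mp hsum y hy, zero_smul]
      · rintro rfl
        exact ⟨0, by simp⟩
    rw [hzero, Set.zero_smul_set (convexHull_nonempty_iff.mpr (Finset.coe_nonempty.mpr hS))]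
    rfl
  · rw [Set.mem_smul_set_iff_inv_smul_mem₀ hpos.ne', Finset.mem_convexHull']
    constructor
    · rintro ⟨c, hc, hsum, rfl⟩
      refine ⟨fun y => t⁻¹ * c y, fun y hy => mul_nonneg (inv_nonneg.mpr ht) (hc y hy), ?_, ?_⟩
      · rw [← mul_sum, hsum, inv_mul_cancel₀ hpos.ne']
      · simp only [mul_smul, smul_sum]
    · rintro ⟨c, hc, hsum, hx⟩
      refine ⟨fun y => t * c y, fun y hy => mul_nonneg ht (hc y hy), ?_, ?_⟩
      · rw [← mul_sum, hsum, mul_one]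
      · simp only [mul_smul, ← smul_sum, hx, smul_inv_smul₀ hpos.ne']

lemma finrank_span_homogenization [FiniteDimensional ℝ V] (hS : S.Nonempty) :
    finrank ℝ (span ℝ (homogenization S : Set (V × ℝ))) =
      finrank ℝ (vectorSpan ℝ (convexHull ℝ (S : Set V))) + 1 := by
  have hlift : (homogenization S : Set (V × ℝ)) =
      (AffineMap.id ℝ V).prod (AffineMap.const ℝ V (1 : ℝ)) '' S := coe_map _ _
  have hinj : Function.Injective
      ((AffineMap.id ℝ V).prod (AffineMap.const ℝ V (1 : ℝ))).linear := fun x y h =>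
    congrArg Prod.fst h
  rw [finrank_span_eq_finrank_vectorSpan_add_one (by simpa [homogenization] using hS)
      snd_eq_one_of_mem_homogenization, ← direction_affineSpan ℝ (convexHull ℝ (S : Set V)),
    affineSpan_convexHull, direction_affineSpan, hlift, ← AffineMap.map_vectorSpan,
    (equivMapOfInjective _ hinj _).finrank_eq]

/-- The points of `V × ℝ` over `Λ` at integral height. Those of height `k` in the cone over a
polytope are the points of `Λ` in its `k`-th dilate. -/
def homogenizedLattice (Λ : AddSubgroup V) : AddSubgroup (V × ℝ) :=
  Λ.prod (Int.castAddHom ℝ).range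

lemma level_hull_homogenization (Λ : AddSubgroup V) (hS : S.Nonempty) (k : ℕ) :
    level (LinearMap.snd ℝ V ℝ) (homogenizedLattice Λ ∩
      hull ℝ (homogenization S : Set (V × ℝ))) k =
        (fun x => (x, (k : ℝ))) '' (Λ ∩ (k : ℝ) • convexHull ℝ (S : Set V)) := by
  ext ⟨x, t⟩
  constructor
  · rintro ⟨⟨hxΛ, hx⟩, rfl : t = k⟩
    exact ⟨x, ⟨hxΛ.1, (mem_hull_homogenization hS k.cast_nonneg).mp hx⟩, rfl⟩
  · rintro ⟨x, ⟨hxΛ, hx⟩, ⟨⟩⟩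
    exact ⟨⟨⟨hxΛ, k, by simp⟩, (mem_hull_homogenization hS k.cast_nonneg).mpr hx⟩, rfl⟩

end Homogenization

section IntegerPoints

variable {ι : Type*} {S T : Finset (ι → ℝ)}

/-- The integer points of `ℝ^ι`, as a subgroup. -/
def integerLattice (ι : Type*) : AddSubgroup (ι → ℝ) :=
  ((Int.castAddHom ℝ).compLeft ι).range

lemma finite_integerLattice_inter [Finite ι] {K : Set (ι → ℝ)} (hK : Bornology.IsBounded K) :
    (integerLattice ι ∩ K : Set (ι → ℝ)).Finite := by
  classical
  cases nonempty_fintype ι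
  obtain ⟨r, hr⟩ := hK.subset_closedBall 0
  refine ((Set.finite_Icc (fun _ : ι => -⌈r⌉) fun _ => ⌈r⌉).image
    ((Int.castAddHom ℝ).compLeft ι)).subset ?_
  rintro _ ⟨⟨p, rfl⟩, hp⟩
  have hcoord (i : ι) : |p i| ≤ ⌈r⌉ := by
    have hnorm := (norm_le_pi_norm _ i).trans (mem_closedBall_zero_iff.mp (hr hp))
    have hle : |(p i : ℝ)| ≤ ⌈r⌉ := hnorm.trans (Int.le_ceil r)
    exact_mod_cast hle
  exact ⟨p, ⟨fun i => (abs_le.mp (hcoord i)).1, fun i => (abs_le.mp (hcoord i)).2⟩, rfl⟩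

lemma finite_level_homogenization [Finite ι] (hS : S.Nonempty) (k : ℕ) :
    (level (LinearMap.snd ℝ (ι → ℝ) ℝ) (homogenizedLattice (integerLattice ι) ∩
      hull ℝ (homogenization S : Set ((ι → ℝ) × ℝ))) k).Finite := by
  cases nonempty_fintype ι
  rw [level_hull_homogenization _ hS]
  exact (finite_integerLattice_inter
    ((isBounded_convexHull.mpr S.finite_toSet.isBounded).smul₀ _)).image _

variable [Fintype ι]

lemma latCount_eq_ncard (Q : Set (ι → ℝ)) (k : ℕ) :
    latCount Q k = (integerLattice ι ∩ (k : ℝ) • Q : Set (ι → ℝ)).ncard := by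
  have himage : (integerLattice ι ∩ (k : ℝ) • Q : Set (ι → ℝ)) =
      (fun p : ι → ℤ => fun i => (p i : ℝ)) '' {p | (fun i => (p i : ℝ)) ∈ (k : ℝ) • Q} := by
    ext x
    constructor
    · rintro ⟨⟨p, rfl⟩, hp⟩
      exact ⟨p, hp, rfl⟩
    · rintro ⟨p, hp, rfl⟩
      exact ⟨⟨p, rfl⟩, hp⟩
  have hinj : Function.Injective fun (p : ι → ℤ) i => (p i : ℝ) := Int.cast_injective.comp_left
  rw [himage, Set.ncard_image_of_injective _ hinj]
  rfl

lemma hStarSeries_homogenization (hS : S.Nonempty) :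
    hStarSeries (LinearMap.snd ℝ (ι → ℝ) ℝ) (homogenizedLattice (integerLattice ι))
      (homogenization S) = (1 - PowerSeries.X) ^ (pdim (convexHull ℝ (S : Set (ι → ℝ))) + 1) *
        ehrSeries (convexHull ℝ (S : Set (ι → ℝ))) := by
  rw [hStarSeries, finrank_span_homogenization hS, pdim]
  congr 1
  ext k
  simp only [hilbertSeries, ehrSeries, PowerSeries.coeff_mk, latCount_eq_ncard,
    level_hull_homogenization _ hS, Set.ncard_image_of_injective _ (Prod.mk_left_injective _)]

lemma coeff_eq_coeff_hStarSeries_of_isHStar (hS : S.Nonempty) {p : Polynomial ℤ}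
    (hp : IsHStar (convexHull ℝ (S : Set (ι → ℝ))) p) (k : ℕ) :
    p.coeff k = (hStarSeries (LinearMap.snd ℝ (ι → ℝ) ℝ) (homogenizedLattice (integerLattice ι))
      (homogenization S)).coeff k := by
  rw [IsHStar] at hp
  rw [hStarSeries_homogenization hS, hp, PowerSeries.coeff_mk]

lemma coeff_le_coeff_of_isHStar_of_subset (hS : S.Nonempty) (hST : S ⊆ T)
    (hT : (T : Set (ι → ℝ)) ⊆ integerLattice ι) {p q : Polynomial ℤ}
    (hp : IsHStar (convexHull ℝ (S : Set (ι → ℝ))) p)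
    (hq : IsHStar (convexHull ℝ (T : Set (ι → ℝ))) q) (k : ℕ) : p.coeff k ≤ q.coeff k := by
  rw [coeff_eq_coeff_hStarSeries_of_isHStar hS hp,
    coeff_eq_coeff_hStarSeries_of_isHStar (hS.mono hST) hq]
  refine coeff_hStarSeries_mono snd_eq_one_of_mem_homogenization (fun x hx => ?_)
    (finite_level_homogenization (hS.mono hST)) (homogenization_mono hST) k
  obtain ⟨y, hy, rfl⟩ := mem_homogenization.mp hx
  exact ⟨hT hy, 1, by simp⟩

lemma coeff_le_coeff_of_isHStar_of_convexHull_subset (hS : S.Nonempty)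
    (hST : convexHull ℝ (S : Set (ι → ℝ)) ⊆ convexHull ℝ (T : Set (ι → ℝ)))
    (hSL : (S : Set (ι → ℝ)) ⊆ integerLattice ι) (hTL : (T : Set (ι → ℝ)) ⊆ integerLattice ι)
    {p q : Polynomial ℤ} (hp : IsHStar (convexHull ℝ (S : Set (ι → ℝ))) p)
    (hq : IsHStar (convexHull ℝ (T : Set (ι → ℝ))) q) (k : ℕ) : p.coeff k ≤ q.coeff k := by
  classical
  have hhull : convexHull ℝ (↑(S ∪ T) : Set (ι → ℝ)) = convexHull ℝ (T : Set (ι → ℝ)) := by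
    rw [coe_union, ← convexHull_convexHull_union_right,
      Set.union_eq_self_of_subset_left ((subset_convexHull ℝ _).trans hST),
      (convex_convexHull ℝ _).convexHull_eq]
  refine coeff_le_coeff_of_isHStar_of_subset hS subset_union_left ?_ hp (hhull ▸ hq) k
  rw [coe_union]
  exact Set.union_subset hSL hTL

end IntegerPoints

end StanleyMonotonicity

/-- Stanley's monotonicity theorem: if `P ⊆ Q` are lattice polytopes,
then the `h^*`-polynomial of `P` is coefficientwise at most that of `Q`. -/
theorem stmt10 {ι : Type*} [Fintype ι] (SP SQ : Finset (ι → ℤ)) (P Q : Set (ι → ℝ))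
    (hPdef : P = convexHull ℝ ((fun z : ι → ℤ => fun i => (z i : ℝ)) '' ↑SP))
    (hQdef : Q = convexHull ℝ ((fun z : ι → ℤ => fun i => (z i : ℝ)) '' ↑SQ))
    (hPne : P.Nonempty) (hsub : P ⊆ Q)
    (p q : Polynomial ℤ) (hp : IsHStar P p) (hq : IsHStar Q q) :
    ∀ i, p.coeff i ≤ q.coeff i := by
  let cast : (ι → ℤ) ↪ (ι → ℝ) := ⟨fun z i => z i, Int.cast_injective.comp_left⟩
  have hhull (S : Finset (ι → ℤ)) : convexHull ℝ ((fun z : ι → ℤ => fun i => (z i : ℝ)) '' ↑S) =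
      convexHull ℝ (S.map cast : Set (ι → ℝ)) := by rw [coe_map]; rfl
  have hlattice (S : Finset (ι → ℤ)) :
      (S.map cast : Set (ι → ℝ)) ⊆ StanleyMonotonicity.integerLattice ι := by
    rw [coe_map]
    rintro _ ⟨z, -, rfl⟩
    exact ⟨z, rfl⟩
  subst hPdef hQdef
  rw [hhull] at hPne hsub hp
  rw [hhull] at hsub hq
  exact StanleyMonotonicity.coeff_le_coeff_of_isHStar_of_convexHull_subset
    (coe_nonempty.mp (convexHull_nonempty_iff.mp hPne)) hsub (hlattice SP) (hlattice SQ) hp hq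
end
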